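/- arXiv:2311.02547 — 2 statements merged into one kernel-verified Lean document; each statement's English description precedes it below -/
import Mathlib

section
/- Let w ≥ 5 be an integer and q = w−3, u = w−2. Then Σ_{a+b+c+d=w, a≥2, b,c,d≥1} 2^c·ζ(a,b,c,d) = ((w−1)/2)·ζ(w) + (q/2)·ζ(u,2) − ζ(3,q). -/
/-- The multiple zeta value `ζ(s₁,…,s_d) = Σ_{k₁>⋯>k_d≥1} 1/(k₁^{s₁}⋯k_d^{s_d})`. -/
noncomputable def mzv {d : ℕ} (s : Fin d → ℕ) : ℝ :=
  ∑' k : {k : Fin d → ℕ // StrictAnti k ∧ ∀ i, 0 < k i},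
    ∏ i, (1 : ℝ) / (k.1 i : ℝ) ^ s i

/-!
Collect the weighted sums of all weights into a generating function in `X`: every factor
`∑ X^n / k^(n+1)` is the expansion of `1 / (k - X)`, and the weights `2 ^ c` move the pole belonging
to `k₃` to `k₃ / 2`. Writing `k₄ = x + 1` and `k₃ = (x + 1) + (y + 1)`, this pole is the midpoint of
`x + 1` and `y + 1`, and symmetrising the series in `x` and `y` replaces the midpoint by the pole
`y + 1`. The partial fraction expansion with poles `k₁`, `k₂`, `x + 1`, `y + 1` (the last two
merging into a double pole when `x = y`) splits the sum into absolutely convergent series, one for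
each kind of pole. Grouped by the value of the pole, each of them telescopes to finite harmonic
sums, and these combine, thanks to Euler's `ζ(2,1) = ζ(3)`, to the coefficients of `ζ(w)`,
`ζ(w - 2, 2)` and `ζ(3, w - 3)`.
-/

namespace MultipleZeta

open Finset

/-! ### Finite harmonic sums -/

/-- The generalised harmonic number `H_n^{(k)} = ∑_{1≤i≤n} 1/i^k`, in which all partial sums of
the series below are expressed. -/
noncomputable def harmonicSum (k n : ℕ) : ℝ := ∑ i ∈ range n, 1 / ((i : ℝ) + 1) ^ k

/-- The nested sum `∑_{1≤i≤n} i^{-j} ∑_{c<m≤c+i} m^{-k}`, the inner sum being encoded as an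
increment of `harmonicSum k`; the residue series below have such sums as coefficients. -/
noncomputable def incrementSum (j k c n : ℕ) : ℝ :=
  ∑ i ∈ range n, (harmonicSum k (c + i + 1) - harmonicSum k c) / ((i : ℝ) + 1) ^ j

local notation "H" => harmonicSum
local notation "W" => incrementSum

lemma harmonicSum_zero (k : ℕ) : H k 0 = 0 := sum_range_zero _

lemma harmonicSum_succ (k n : ℕ) : H k (n + 1) = H k n + 1 / ((n : ℝ) + 1) ^ k :=
  sum_range_succ _ n

lemma sum_range_one_div_add_pow (k c n : ℕ) :
    ∑ i ∈ range n, 1 / ((c : ℝ) + i + 1) ^ k = H k (c + n) - H k c := by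
  simp [harmonicSum, sum_range_add]

lemma sum_range_one_div_add (c n : ℕ) :
    ∑ i ∈ range n, 1 / ((c : ℝ) + i + 1) = H 1 (c + n) - H 1 c := by
  simpa using sum_range_one_div_add_pow 1 c n

lemma sum_range_one_div_mul_reflect (c d n : ℕ) :
    ∑ i ∈ range n, 1 / (((n : ℝ) - i + c) * ((i : ℝ) + d + 1))
      = (H 1 (c + n) - H 1 c + (H 1 (d + n) - H 1 d)) / ((n : ℝ) + c + d + 1) := by
  have hreflect : ∑ i ∈ range n, 1 / ((n : ℝ) - i + c) = H 1 (c + n) - H 1 c := by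
    rw [← sum_range_one_div_add, ← sum_range_reflect]
    refine sum_congr rfl fun i hi => ?_
    have hin := mem_range.1 hi
    rw [Nat.sub_sub, Nat.cast_sub (by omega)]
    push_cast
    ring_nf
  rw [← hreflect, ← sum_range_one_div_add, ← sum_add_distrib, sum_div]
  refine sum_congr rfl fun i hi => ?_
  have hin : (i : ℝ) < n := by exact_mod_cast mem_range.1 hi
  have hpos : (0 : ℝ) < (n : ℝ) - i + c := by linarith [Nat.cast_nonneg (α := ℝ) c]
  field_simp
  ring

lemma incrementSum_succ (j k c n : ℕ) :
    W j k c (n + 1) = W j k c n + (H k (c + n + 1) - H k c) / ((n : ℝ) + 1) ^ j :=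
  sum_range_succ _ n

lemma incrementSum_succ_left (j k c n : ℕ) :
    W j k (c + 1) n = W j k c n
      + ∑ i ∈ range n, 1 / (((i : ℝ) + 1) ^ j * ((c : ℝ) + i + 2) ^ k)
      - H j n / ((c : ℝ) + 1) ^ k := by
  simp only [incrementSum, harmonicSum_succ, sum_div, ← sum_add_distrib, ← sum_sub_distrib,
    harmonicSum.eq_def j]
  refine sum_congr rfl fun i _ => ?_
  rw [show c + 1 + i = c + i + 1 by ring, harmonicSum_succ]
  push_cast
  field_simp
  ring

lemma sum_range_one_div_mul_add_two (n : ℕ) :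
    ∑ i ∈ range n, 1 / (((i : ℝ) + 1) * ((n : ℝ) + i + 2))
      = (H 1 n - (H 1 (n + 1 + n) - H 1 (n + 1))) / ((n : ℝ) + 1) := by
  rw [← sum_range_one_div_add, harmonicSum, ← sum_sub_distrib, sum_div]
  refine sum_congr rfl fun i _ => ?_
  push_cast
  field_simp
  ring

lemma sum_range_one_div_mul_add_two_sq (n : ℕ) :
    ∑ i ∈ range n, 1 / (((i : ℝ) + 1) * ((n : ℝ) + i + 2) ^ 2)
      = ((H 1 n - (H 1 (n + 1 + n) - H 1 (n + 1))) / ((n : ℝ) + 1)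
          - (H 2 (n + 1 + n) - H 2 (n + 1))) / ((n : ℝ) + 1) := by
  rw [← sum_range_one_div_mul_add_two, ← sum_range_one_div_add_pow, ← sum_sub_distrib, sum_div]
  refine sum_congr rfl fun i _ => ?_
  push_cast
  field_simp
  ring

lemma sum_range_one_div_sq_mul_add_two (n : ℕ) :
    ∑ i ∈ range n, 1 / (((i : ℝ) + 1) ^ 2 * ((n : ℝ) + i + 2))
      = (H 2 n - (H 1 n - (H 1 (n + 1 + n) - H 1 (n + 1))) / ((n : ℝ) + 1)) / ((n : ℝ) + 1) := by
  rw [← sum_range_one_div_mul_add_two, harmonicSum, ← sum_sub_distrib, sum_div]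
  refine sum_congr rfl fun i _ => ?_
  field_simp
  ring

lemma incrementSum_one_one_diag (n : ℕ) : W 1 1 n n = H 2 n / 2 := by
  induction n with
  | zero => simp [incrementSum, harmonicSum_zero]
  | succ n ih =>
    rw [incrementSum_succ, incrementSum_succ_left, ih]
    simp only [pow_one, sum_range_one_div_mul_add_two, harmonicSum_succ _ (n + 1 + n),
      harmonicSum_succ _ n]
    push_cast
    field_simp
    ring

lemma two_mul_incrementSum_one_two_add_incrementSum_two_one_diag (n : ℕ) :
    2 * W 1 2 n n + W 2 1 n n = H 3 n - ∑ m ∈ range n, H 1 m / ((m : ℝ) + 1) ^ 2 := by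
  induction n with
  | zero => simp [incrementSum, harmonicSum_zero]
  | succ n ih =>
    have h12 : W 1 2 n n = (H 3 n - ∑ m ∈ range n, H 1 m / ((m : ℝ) + 1) ^ 2 - W 2 1 n n) / 2 := by
      linarith
    simp only [incrementSum_succ, incrementSum_succ_left, h12, pow_one,
      sum_range_one_div_mul_add_two_sq, sum_range_one_div_sq_mul_add_two,
      harmonicSum_succ _ (n + 1 + n), harmonicSum_succ _ n, sum_range_succ _ n]
    push_cast
    field_simp
    ring

lemma sum_range_inv_mul_sum_range (f : ℕ → ℝ) (n : ℕ) :
    ∑ i ∈ range n, 1 / ((i : ℝ) + 1) * ∑ l ∈ range (i + 1), f l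
      = ∑ l ∈ range n, (H 1 n - H 1 l) * f l := by
  induction n with
  | zero => simp
  | succ n ih =>
    have hstep : ∀ l : ℕ, (H 1 (n + 1) - H 1 l) * f l
        = (H 1 n - H 1 l) * f l + 1 / ((n : ℝ) + 1) * f l := fun l => by
      rw [harmonicSum_succ, pow_one]
      ring
    simp only [hstep, sum_add_distrib, ← mul_sum]
    rw [sum_range_succ, ih, sum_range_succ (fun l => (H 1 n - H 1 l) * f l)]
    ring

lemma incrementSum_one_left (k c n : ℕ) :
    W 1 k c n = ∑ l ∈ range n, (H 1 n - H 1 l) * (1 / ((c : ℝ) + l + 1) ^ k) := by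
  rw [← sum_range_inv_mul_sum_range, incrementSum]
  refine sum_congr rfl fun i _ => ?_
  rw [sum_range_one_div_add_pow, pow_one, add_assoc, one_div_mul_eq_div]

lemma sum_range_tail_mul_inv (z : ℝ) (n : ℕ) :
    ∑ m ∈ range n, (z - H 2 (m + 1)) / ((m : ℝ) + 1)
      = H 1 n * (z - H 2 n) + ∑ m ∈ range n, H 1 m / ((m : ℝ) + 1) ^ 2 := by
  induction n with
  | zero => simp [harmonicSum_zero]
  | succ n ih =>
    rw [sum_range_succ, sum_range_succ, ih, harmonicSum_succ, harmonicSum_succ]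
    field_simp
    ring

/-! ### Rearranging sums over products -/

section HasSum

variable {α β M : Type*} [AddCommMonoid M] [TopologicalSpace M]

lemma hasSum_of_eq {f g : α → M} {a b : M} (h : HasSum f a) (hfg : ∀ i, g i = f i) (hab : b = a) :
    HasSum g b :=
  hab ▸ h.congr_fun hfg

lemma hasSum_prod_of_fiberwise [ContinuousAdd M] [T3Space M] {f : α × β → M} {g : α → M} {S : M}
    (hf : Summable f) (hfg : ∀ a, HasSum (fun b => f (a, b)) (g a)) (hg : HasSum g S) :
    HasSum f S := by
  rw [hg.unique (hf.hasSum.prod_fiberwise hfg)]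
  exact hf.hasSum

lemma hasSum_prod_sum_range [ContinuousAdd M] [RegularSpace M] {g : α → ℕ → ℕ → M} {S : M}
    (h : HasSum (fun t : α × ℕ × ℕ => g t.1 (t.2.1 + t.2.2 + 1) t.2.1) S) :
    HasSum (fun p : α × ℕ => ∑ i ∈ range p.2, g p.1 p.2 i) S := by
  let φ : α × ℕ × ℕ → (α × ℕ) × ℕ := fun t => ((t.1, t.2.1 + t.2.2 + 1), t.2.1)
  let f : (α × ℕ) × ℕ → M := fun p => if p.2 < p.1.2 then g p.1.1 p.1.2 p.2 else 0
  have hφ : Function.Injective φ := by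
    rintro ⟨a, i, j⟩ ⟨b, k, l⟩ h
    simp only [φ, Prod.mk.injEq] at h ⊢
    exact ⟨h.1.1, h.2, by omega⟩
  have hf : HasSum f S := by
    refine (hφ.hasSum_iff fun p hp => if_neg fun hlt => hp ?_).1 (h.congr_fun fun t => ?_)
    · exact ⟨(p.1.1, p.2, p.1.2 - p.2 - 1), by ext <;> simp only [φ]; omega⟩
    · exact if_pos (by simp [φ])
  refine hf.prod_fiberwise fun p => ?_
  rw [sum_congr rfl fun i hi => (if_pos (mem_range.1 hi)).symm]
  exact hasSum_sum_of_ne_finset_zero fun i hi => if_neg (mt mem_range.2 hi)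

lemma hasSum_sum_range [ContinuousAdd M] [RegularSpace M] {g : ℕ → ℕ → M} {S : M}
    (h : HasSum (fun p : ℕ × ℕ => g (p.1 + p.2 + 1) p.1) S) :
    HasSum (fun n => ∑ i ∈ range n, g n i) S := by
  rw [← (Equiv.punitProd (ℕ × ℕ)).hasSum_iff] at h
  rw [← (Equiv.punitProd ℕ).hasSum_iff]
  exact hasSum_prod_sum_range (g := fun _ : Unit => g) h

lemma hasSum_diagonal_iff {f : α × α × β → M} {S : M}
    (hf : ∀ t, t.1 ≠ t.2.1 → f t = 0) :
    HasSum (fun p : α × β => f (p.1, p.1, p.2)) S ↔ HasSum f S := by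
  have hinj : Function.Injective fun p : α × β => (p.1, p.1, p.2) := fun p q h => by
    simp only [Prod.mk.injEq] at h
    exact Prod.ext h.1 h.2.2
  refine hinj.hasSum_iff (f := f) fun t ht => hf t fun h => ht ⟨(t.1, t.2.2), ?_⟩
  exact Prod.ext rfl (Prod.ext h rfl)

lemma hasSum_swap {f : α × α × β → M} {S : M} (h : HasSum f S) :
    HasSum (fun t : α × α × β => f (t.2.1, t.1, t.2.2)) S := by
  let e : α × α × β ≃ α × α × β :=
    ⟨fun t => (t.2.1, t.1, t.2.2), fun t => (t.2.1, t.1, t.2.2), fun _ => rfl, fun _ => rfl⟩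
  exact e.hasSum_iff.2 h

end HasSum

lemma hasSum_prod_of_nonneg {α β : Type*} {f : α × β → ℝ} {g : α → ℝ} {S : ℝ}
    (hf : ∀ p, 0 ≤ f p) (hfg : ∀ a, HasSum (fun b => f (a, b)) (g a)) (hg : HasSum g S) :
    HasSum f S := by
  refine hasSum_prod_of_fiberwise ?_ hfg hg
  refine (summable_prod_of_nonneg hf).2 ⟨fun a => (hfg a).summable, ?_⟩
  simpa only [(hfg _).tsum_eq] using hg.summable

/-! ### Telescoping series and zeta values of depth two -/

lemma hasSum_mzv {d : ℕ} {ι : Type*} (e : ι ≃ {k : Fin d → ℕ // StrictAnti k ∧ ∀ i, 0 < k i})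
    (s : Fin d → ℕ) (h : Summable fun t => ∏ i, (1 : ℝ) / ((e t).1 i : ℝ) ^ s i) :
    HasSum (fun t => ∏ i, (1 : ℝ) / ((e t).1 i : ℝ) ^ s i) (mzv s) := by
  rw [mzv, ← e.tsum_eq]
  exact h.hasSum

/-- The parametrisation `k₁ = x + 1` of the summation indices of `ζ(a)`. -/
def indexEquivOne : ℕ ≃ {k : Fin 1 → ℕ // StrictAnti k ∧ ∀ i, 0 < k i} where
  toFun x := ⟨![x + 1], Subsingleton.strictAnti _, by simp⟩
  invFun k := k.1 0 - 1
  left_inv x := by simp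
  right_inv := by
    rintro ⟨k, -, hpos⟩
    ext i
    have := hpos 0
    fin_cases i
    simp only [Fin.zero_eta, Matrix.cons_val_fin_one]
    omega

/-- The parametrisation `(k₁, k₂) = (x + y + 2, x + 1)` of the summation indices of `ζ(a, b)`. -/
def indexEquivTwo : ℕ × ℕ ≃ {k : Fin 2 → ℕ // StrictAnti k ∧ ∀ i, 0 < k i} where
  toFun p := ⟨![p.1 + p.2 + 2, p.1 + 1],
    by simp [Fin.strictAnti_iff_succ_lt], by simp [Fin.forall_fin_two]⟩
  invFun k := (k.1 1 - 1, k.1 0 - k.1 1 - 1)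
  left_inv p := by ext <;> simp only [Matrix.cons_val] <;> omega
  right_inv := by
    rintro ⟨k, hk, hpos⟩
    ext i
    have := hpos 1
    have : k 1 < k 0 := hk (by decide)
    fin_cases i <;> simp only [Fin.zero_eta, Fin.mk_one, Matrix.cons_val] <;> omega

/-- The parametrisation `(k₁, k₂, k₃, k₄) = (x + y + r + s + 4, x + y + r + 3, x + y + 2, x + 1)`
of the summation indices of `ζ(a, b, c, d)`. -/
def indexEquivFour :
    ℕ × ℕ × ℕ × ℕ ≃ {k : Fin 4 → ℕ // StrictAnti k ∧ ∀ i, 0 < k i} where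
  toFun t := ⟨![t.1 + t.2.1 + t.2.2.1 + t.2.2.2 + 4, t.1 + t.2.1 + t.2.2.1 + 3,
      t.1 + t.2.1 + 2, t.1 + 1],
    by simp [Fin.strictAnti_iff_succ_lt, Fin.forall_fin_succ],
    by simp [Fin.forall_fin_succ]⟩
  invFun k := (k.1 3 - 1, k.1 2 - k.1 3 - 1, k.1 1 - k.1 2 - 1, k.1 0 - k.1 1 - 1)
  left_inv t := by ext <;> simp only [Matrix.cons_val] <;> omega
  right_inv := by
    rintro ⟨k, hk, hpos⟩
    ext i
    have := hpos 3
    have : k 1 < k 0 := hk (by decide)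
    have : k 2 < k 1 := hk (by decide)
    have : k 3 < k 2 := hk (by decide)
    fin_cases i <;> simp only [Fin.zero_eta, Fin.mk_one, Fin.reduceFinMk, Matrix.cons_val] <;> omega

lemma hasSum_mzv_one {a : ℕ} (ha : 2 ≤ a) :
    HasSum (fun m : ℕ => 1 / ((m : ℝ) + 1) ^ a) (mzv ![a]) := by
  have hsum : Summable fun m : ℕ => 1 / ((m : ℝ) + 1) ^ a := by
    exact_mod_cast (summable_nat_add_iff 1).2 (Real.summable_one_div_nat_pow.2 ha)
  simpa [indexEquivOne] using hasSum_mzv indexEquivOne ![a] (by simpa [indexEquivOne] using hsum)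

lemma hasSum_tail {a : ℕ} (ha : 2 ≤ a) (c : ℕ) :
    HasSum (fun s : ℕ => 1 / ((c : ℝ) + s + 1) ^ a) (mzv ![a] - H a c) := by
  refine ((hasSum_nat_add_iff' c).2 (hasSum_mzv_one ha)).congr_fun fun s => ?_
  rw [Nat.cast_add, add_comm (s : ℝ)]

lemma hasSum_telescoping (c : ℕ) {n : ℕ} (hn : n ≠ 0) :
    HasSum (fun s : ℕ => 1 / (((c : ℝ) + s + 1 + n) * ((c : ℝ) + s + 1)))
      ((H 1 (c + n) - H 1 c) / n) := by
  rw [hasSum_iff_tendsto_nat_of_nonneg fun s => by positivity]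
  have hpartial : ∀ N : ℕ, ∑ s ∈ range N, 1 / (((c : ℝ) + s + 1 + n) * ((c : ℝ) + s + 1))
      = (H 1 (c + n) - H 1 c - ∑ i ∈ range n, 1 / (((c + N : ℕ) : ℝ) + i + 1)) / n := by
    intro N
    have hsplit : ∀ s : ℕ, 1 / (((c : ℝ) + s + 1 + n) * ((c : ℝ) + s + 1))
        = (1 / ((c : ℝ) + s + 1) - 1 / (((c + n : ℕ) : ℝ) + s + 1)) / n := fun s => by
      push_cast
      field_simp
      ring
    simp only [hsplit, ← sum_div, sum_sub_distrib, sum_range_one_div_add]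
    rw [add_right_comm c N n]
    ring
  have hremainder : Filter.Tendsto
      (fun N : ℕ => ∑ i ∈ range n, 1 / (((c + N : ℕ) : ℝ) + i + 1)) Filter.atTop (nhds 0) := by
    rw [← sum_const_zero (s := range n)]
    refine tendsto_finsetSum _ fun i _ => ?_
    have := (tendsto_one_div_add_atTop_nhds_zero_nat (𝕜 := ℝ)).comp
      (Filter.tendsto_add_atTop_nat (c + i))
    refine this.congr fun N => ?_
    simp only [Function.comp_apply]
    push_cast
    ring_nf
  simp only [hpartial]
  simpa using (hremainder.const_sub (H 1 (c + n) - H 1 c)).div_const (n : ℝ)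

lemma hasSum_telescoping_sq (c : ℕ) {n : ℕ} (hn : n ≠ 0) :
    HasSum (fun s : ℕ => 1 / (((c : ℝ) + s + 1 + n) * ((c : ℝ) + s + 1) ^ 2))
      ((mzv ![2] - H 2 c - (H 1 (c + n) - H 1 c) / n) / n) := by
  refine (((hasSum_tail le_rfl c).sub (hasSum_telescoping c hn)).div_const _).congr_fun fun s => ?_
  field_simp
  ring

lemma hasSum_one_div_sub_mul (x d : ℕ) :
    HasSum (fun y : ℕ => 1 / (((y : ℝ) - x) * ((y : ℝ) + d + 1)))
      ((H 1 d - H 1 x + 1 / ((x : ℝ) + d + 1)) / ((x : ℝ) + d + 1)) := by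
  have hbelow : ∑ y ∈ range x, 1 / (((y : ℝ) - x) * ((y : ℝ) + d + 1))
      = -(H 1 x + (H 1 (d + x) - H 1 d)) / ((x : ℝ) + d + 1) := by
    have h := sum_range_one_div_mul_reflect 0 d x
    rw [zero_add, harmonicSum_zero, sub_zero, Nat.cast_zero, add_zero] at h
    rw [neg_div, ← h, ← sum_neg_distrib]
    refine sum_congr rfl fun y _ => ?_
    rw [← neg_sub (x : ℝ) y, neg_mul, div_neg, add_zero]
  have habove : HasSum
      (fun s : ℕ => 1 / ((((s + (x + 1) : ℕ) : ℝ) - x) * (((s + (x + 1) : ℕ) : ℝ) + d + 1)))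
      (H 1 (d + x + 1) / ((x : ℝ) + d + 1)) := by
    have h := hasSum_telescoping 0 (n := d + x + 1) (by omega)
    rw [zero_add, harmonicSum_zero, sub_zero] at h
    refine hasSum_of_eq h (fun s => ?_) ?_ <;> push_cast <;> ring_nf
  rw [← hasSum_nat_add_iff' (x + 1), sum_range_succ, hbelow]
  refine hasSum_of_eq habove (fun s => rfl) ?_
  rw [harmonicSum_succ, sub_self, zero_mul, div_zero, add_zero]
  push_cast
  ring

lemma hasSum_harmonicSum_increment (c n : ℕ) :
    HasSum (fun r : ℕ => (H 1 (c + r + 1 + n) - H 1 (c + r + 1)) / ((c : ℝ) + r + 1))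
      (W 1 1 c n) := by
  have h := hasSum_sum (s := range n) fun i _ => hasSum_telescoping c (Nat.succ_ne_zero i)
  simp only [incrementSum, pow_one]
  refine hasSum_of_eq h (fun r => ?_) (by simp only [Nat.cast_succ, add_assoc])
  rw [← sum_range_one_div_add, sum_div]
  refine sum_congr rfl fun i _ => ?_
  push_cast
  rw [div_div]
  ring_nf

lemma hasSum_telescoping_double (c : ℕ) {n : ℕ} (hn : n ≠ 0) :
    HasSum (fun p : ℕ × ℕ => 1 / (((c : ℝ) + p.1 + p.2 + 2 + n) * ((c : ℝ) + p.1 + p.2 + 2)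
        * ((c : ℝ) + p.1 + 1))) (W 1 1 c n / n) := by
  refine hasSum_prod_of_nonneg (fun p => by positivity) (fun r => ?_)
    ((hasSum_harmonicSum_increment c n).div_const _)
  refine hasSum_of_eq ((hasSum_telescoping (c + r + 1) hn).div_const ((c : ℝ) + r + 1))
    (fun s => ?_) (div_right_comm _ _ _)
  push_cast
  rw [div_div]
  ring_nf

lemma summable_mzv_two {a b : ℕ} (ha : 2 ≤ a) (hb : 1 ≤ b) :
    Summable fun p : ℕ × ℕ => 1 / (((p.1 : ℝ) + p.2 + 2) ^ a * ((p.1 : ℝ) + 1) ^ b) := by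
  have hmajorant : Summable fun p : ℕ × ℕ =>
      1 / (((p.1 : ℝ) + p.2 + 1 + 1) * ((p.1 : ℝ) + p.2 + 1) * ((p.1 : ℝ) + 1)) := by
    refine (hasSum_prod_of_nonneg (fun p => by positivity) (fun i => ?_)
      (hasSum_mzv_one le_rfl)).summable
    refine hasSum_of_eq ((hasSum_telescoping i one_ne_zero).div_const ((i : ℝ) + 1))
      (fun j => ?_) ?_
    · rw [div_div, Nat.cast_one]
    · rw [harmonicSum_succ, add_sub_cancel_left, Nat.cast_one, div_one, div_div]
      ring_nf
  refine hmajorant.of_nonneg_of_le (fun p => by positivity) fun p => ?_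
  refine one_div_le_one_div_of_le (by positivity) (mul_le_mul ?_ ?_ (by positivity) (by positivity))
  · calc ((p.1 : ℝ) + p.2 + 1 + 1) * ((p.1 : ℝ) + p.2 + 1) ≤ ((p.1 : ℝ) + p.2 + 2) ^ 2 := by
          nlinarith [Nat.cast_nonneg (α := ℝ) p.1, Nat.cast_nonneg (α := ℝ) p.2]
      _ ≤ _ := pow_le_pow_right₀ (by norm_cast; omega) ha
  · exact le_self_pow₀ (by simp) (by omega)

lemma hasSum_mzv_two {a b : ℕ} (ha : 2 ≤ a) (hb : 1 ≤ b) :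
    HasSum (fun p : ℕ × ℕ => 1 / (((p.1 : ℝ) + p.2 + 2) ^ a * ((p.1 : ℝ) + 1) ^ b))
      (mzv ![a, b]) := by
  have hterm : ∀ p : ℕ × ℕ, 1 / (((p.1 : ℝ) + p.2 + 2) ^ a * ((p.1 : ℝ) + 1) ^ b)
      = ∏ i, (1 : ℝ) / ((indexEquivTwo p).1 i : ℝ) ^ (![a, b] i) := fun p => by
    simp [indexEquivTwo, Fin.prod_univ_two, mul_comm]
  have hsum := summable_mzv_two ha hb
  simp only [hterm] at hsum ⊢
  exact hasSum_mzv _ _ hsum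

lemma hasSum_mzv_two_fst {a b : ℕ} (ha : 2 ≤ a) (hb : 1 ≤ b) :
    HasSum (fun m : ℕ => H b m / ((m : ℝ) + 1) ^ a) (mzv ![a, b]) := by
  have h := hasSum_sum_range (g := fun m i => 1 / ((i : ℝ) + 1) ^ b / ((m : ℝ) + 1) ^ a)
    ((hasSum_mzv_two ha hb).congr_fun fun p => by
      push_cast
      rw [div_div, mul_comm]
      ring_nf)
  exact h.congr_fun fun m => sum_div _ _ _

lemma hasSum_mzv_two_snd {a b : ℕ} (ha : 2 ≤ a) (hb : 1 ≤ b) :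
    HasSum (fun m : ℕ => (mzv ![a] - H a (m + 1)) / ((m : ℝ) + 1) ^ b) (mzv ![a, b]) := by
  refine (hasSum_mzv_two ha hb).prod_fiberwise fun m => ?_
  refine ((hasSum_tail ha (m + 1)).div_const _).congr_fun fun s => ?_
  rw [div_div]
  push_cast
  ring_nf

/-- Euler's evaluation: both sides differ by `ζ(2,1)` from `∑_{i,j≥1} 1/(i j (i+j))`. -/
theorem mzv_two_one : mzv ![2, 1] = mzv ![3] := by
  have hsymm := (hasSum_mzv_two le_rfl le_rfl).add
    ((Equiv.prodComm ℕ ℕ).hasSum_iff.2 (hasSum_mzv_two le_rfl le_rfl))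
  have hfiber := hasSum_prod_of_nonneg
    (f := fun p : ℕ × ℕ => 1 / (((p.2 : ℝ) + 1 + (p.1 + 1)) * ((p.2 : ℝ) + 1) * ((p.1 : ℝ) + 1)))
    (fun p => by positivity) (fun i => ?_)
    ((hasSum_mzv_two_fst le_rfl le_rfl).add (hasSum_mzv_one (a := 3) (by norm_num)))
  · have h := hsymm.unique (hfiber.congr_fun fun p => ?_)
    · linarith
    · simp only [Equiv.prodComm_apply, Prod.fst_swap, Prod.snd_swap, Function.comp_apply, pow_one]
      field_simp
      ring
  · refine hasSum_of_eq ((hasSum_telescoping 0 (Nat.succ_ne_zero i)).div_const ((i : ℝ) + 1))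
      (fun j => ?_) ?_
    · rw [div_div, Nat.cast_zero, zero_add, Nat.cast_succ]
    · rw [zero_add, harmonicSum_zero, harmonicSum_succ]
      push_cast
      field_simp
      ring

lemma hasSum_tail_div (c : ℕ) :
    HasSum (fun r : ℕ => (mzv ![2] - H 2 (c + r + 1)) / ((c : ℝ) + r + 1))
      (mzv ![3] - H 1 c * (mzv ![2] - H 2 c) - ∑ m ∈ range c, H 1 m / ((m : ℝ) + 1) ^ 2) := by
  have h := hasSum_mzv_two_snd (a := 2) le_rfl le_rfl
  rw [mzv_two_one, ← hasSum_nat_add_iff' c] at h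
  simp only [pow_one, sum_range_tail_mul_inv, ← sub_sub] at h
  refine h.congr_fun fun r => ?_
  rw [Nat.cast_add, add_comm c r, add_comm (c : ℝ)]

lemma hasSum_harmonicSum_increment_sq (c n : ℕ) :
    HasSum (fun r : ℕ => (H 1 (c + r + 1 + n) - H 1 (c + r + 1)) / ((c : ℝ) + r + 1) ^ 2)
      (H 1 n * (mzv ![2] - H 2 c) - W 2 1 c n) := by
  have h := hasSum_sum (s := range n) fun i _ => hasSum_telescoping_sq c (Nat.succ_ne_zero i)
  refine hasSum_of_eq h (fun r => ?_) ?_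
  · rw [← sum_range_one_div_add, sum_div]
    refine sum_congr rfl fun i _ => ?_
    push_cast
    rw [div_div]
    ring_nf
  · rw [incrementSum, harmonicSum.eq_def 1 n, sum_mul, ← sum_sub_distrib]
    refine sum_congr rfl fun i _ => ?_
    rw [add_assoc, Nat.cast_succ]
    field_simp

lemma hasSum_telescoping_double_sq (c : ℕ) {n : ℕ} (hn : n ≠ 0) :
    HasSum (fun p : ℕ × ℕ => 1 / (((c : ℝ) + p.1 + p.2 + 2 + n) * ((c : ℝ) + p.1 + p.2 + 2)
        * ((c : ℝ) + p.1 + 1)) * (1 / ((c : ℝ) + p.1 + p.2 + 2) + 1 / ((c : ℝ) + p.1 + 1)))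
      ((mzv ![3] - H 1 c * (mzv ![2] - H 2 c) - ∑ m ∈ range c, H 1 m / ((m : ℝ) + 1) ^ 2
        - W 1 1 c n / n + (H 1 n * (mzv ![2] - H 2 c) - W 2 1 c n)) / n) := by
  have hr := (((hasSum_tail_div c).sub ((hasSum_harmonicSum_increment c n).div_const n)).add
    (hasSum_harmonicSum_increment_sq c n)).div_const (n : ℝ)
  refine hasSum_prod_of_nonneg (fun p => by positivity) (fun r => ?_) hr
  have hs := ((hasSum_telescoping_sq (c + r + 1) hn).div_const ((c : ℝ) + r + 1)).add
    ((hasSum_telescoping (c + r + 1) hn).div_const (((c : ℝ) + r + 1) ^ 2))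
  refine hasSum_of_eq hs (fun s => ?_) ?_
  · push_cast
    rw [show (c : ℝ) + r + s + 2 = c + r + 1 + s + 1 by ring]
    simp only [div_eq_mul_inv, mul_inv, one_mul, sq]
    ring
  · field_simp

/-! ### Partial fractions of generating functions -/

section PoleSeries

open PowerSeries

variable {K : Type*} [Field K]

/-- The expansion `∑ X^n / a^(n+1)` of `1 / (a - X)`: the sum over all decompositions of the weight
of a product of inverse powers is a coefficient of a product of such series. -/
noncomputable def poleSeries (a : K) : K⟦X⟧ :=
  PowerSeries.mk fun n => 1 / a ^ (n + 1)

lemma coeff_poleSeries (a : K) (n : ℕ) : coeff n (poleSeries a) = 1 / a ^ (n + 1) :=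
  coeff_mk _ _

lemma coeff_poleSeries_mul (a : K) (φ : K⟦X⟧) (n : ℕ) :
    coeff n (poleSeries a * φ) = ∑ i ∈ range (n + 1), 1 / a ^ (i + 1) * coeff (n - i) φ := by
  simp only [coeff_mul, coeff_poleSeries]
  exact Nat.sum_antidiagonal_eq_sum_range_succ_mk _ _

lemma sub_X_mul_poleSeries {a : K} (ha : a ≠ 0) : (C a - X) * poleSeries a = 1 := by
  ext n
  rw [sub_mul, map_sub, coeff_C_mul, coeff_poleSeries, coeff_one]
  rcases n with _ | n
  · simp [ha]
  · rw [coeff_succ_X_mul, coeff_poleSeries, if_neg n.succ_ne_zero]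
    field_simp
    ring

lemma poleSeries_mul_poleSeries {a b : K} (ha : a ≠ 0) (hb : b ≠ 0) (hab : a ≠ b) :
    poleSeries a * poleSeries b = (a - b)⁻¹ • (poleSeries b - poleSeries a) := by
  rw [eq_inv_smul_iff₀ (sub_ne_zero.2 hab), smul_eq_C_mul, map_sub]
  linear_combination poleSeries b * sub_X_mul_poleSeries ha
    - poleSeries a * sub_X_mul_poleSeries hb

lemma coeff_poleSeries_mul_self (a : K) (n : ℕ) :
    coeff n (poleSeries a * poleSeries a) = ((n : K) + 1) / a ^ (n + 2) := by
  have hterm : ∀ i ∈ range (n + 1), 1 / a ^ (i + 1) * coeff (n - i) (poleSeries a)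
      = 1 / a ^ (n + 2) := fun i hi => by
    rw [coeff_poleSeries, one_div_mul_one_div, ← pow_add,
      show i + 1 + (n - i + 1) = n + 2 by have := mem_range.1 hi; omega]
  rw [coeff_poleSeries_mul, sum_congr rfl hterm, sum_const, card_range, nsmul_eq_mul]
  push_cast
  ring

lemma poleSeries_midpoint_mul {p q : K} [NeZero (2 : K)] (hp : p ≠ 0) (hq : q ≠ 0)
    (hpq : p + q ≠ 0) :
    poleSeries ((p + q) / 2) * (poleSeries p + poleSeries q)
      = 2 * (poleSeries p * poleSeries q) := by
  have hm := sub_X_mul_poleSeries (div_ne_zero hpq two_ne_zero)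
  have hmid : 2 * C ((p + q) / 2) = C p + C q := by
    rw [← map_add, ← map_ofNat C, ← map_mul, mul_div_cancel₀ _ two_ne_zero]
  linear_combination
    2 * (poleSeries p * poleSeries q) * hm
    - poleSeries ((p + q) / 2) * poleSeries p * sub_X_mul_poleSeries hq
    - poleSeries ((p + q) / 2) * poleSeries q * sub_X_mul_poleSeries hp
    - poleSeries ((p + q) / 2) * poleSeries p * poleSeries q * hmid

lemma poleSeries_mul_of_ne {a b p q : K} (ha : a ≠ 0) (hb : b ≠ 0) (hp : p ≠ 0) (hq : q ≠ 0)
    (hab : a ≠ b) (hap : a ≠ p) (haq : a ≠ q) (hbp : b ≠ p) (hbq : b ≠ q) (hpq : p ≠ q) :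
    poleSeries a * (poleSeries b * (poleSeries p * poleSeries q))
      = (1 / ((a - b) * (b - p) * (b - q))) • poleSeries b
        - (1 / ((a - b) * (a - p) * (a - q))) • poleSeries a
        + (1 / ((p - q) * (a - q) * (b - q))) • poleSeries q
        - (1 / ((p - q) * (a - p) * (b - p))) • poleSeries p := by
  simp only [poleSeries_mul_poleSeries hp hq hpq, poleSeries_mul_poleSeries hb hp hbp,
    poleSeries_mul_poleSeries hb hq hbq, poleSeries_mul_poleSeries ha hb hab,
    poleSeries_mul_poleSeries ha hp hap, poleSeries_mul_poleSeries ha hq haq,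
    mul_smul_comm, mul_sub]
  rw [← sub_ne_zero] at hab hap haq hbp hbq hpq
  match_scalars <;> field_simp <;> ring

lemma poleSeries_mul_sq_of_ne {a b p : K} (ha : a ≠ 0) (hb : b ≠ 0) (hp : p ≠ 0)
    (hab : a ≠ b) (hap : a ≠ p) (hbp : b ≠ p) :
    poleSeries a * (poleSeries b * (poleSeries p * poleSeries p))
      = (1 / ((a - b) * (b - p) * (b - p))) • poleSeries b
        - (1 / ((a - b) * (a - p) * (a - p))) • poleSeries a
        + (1 / ((a - p) * (b - p))) • (poleSeries p * poleSeries p)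
        - (1 / ((a - p) * (b - p)) * (1 / (a - p) + 1 / (b - p))) • poleSeries p := by
  rw [← mul_assoc (poleSeries b), poleSeries_mul_poleSeries hb hp hbp, smul_mul_assoc, sub_mul,
    poleSeries_mul_poleSeries hb hp hbp, mul_smul_comm, mul_sub, ← mul_assoc]
  simp only [poleSeries_mul_poleSeries ha hb hab, poleSeries_mul_poleSeries ha hp hap,
    mul_smul_comm, smul_mul_assoc, mul_sub, sub_mul]
  rw [← sub_ne_zero] at hab hap hbp
  match_scalars <;> field_simp <;> ring

end PoleSeries

lemma sum_Icc_add {M : Type*} [AddCommMonoid M] (f : ℕ → M) (m n : ℕ) :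
    ∑ a ∈ Icc m (n + m), f a = ∑ i ∈ range (n + 1), f (i + m) := by
  rw [range_eq_Ico, sum_Ico_add' f 0 (n + 1) m, zero_add, add_right_comm,
    Ico_add_one_right_eq_Icc]

lemma sum_Icc_weight {M : Type*} [AddCommMonoid M] (f : ℕ → ℕ → ℕ → ℕ → M) (n : ℕ) :
    ∑ a ∈ Icc 2 (n + 5 - 3), ∑ b ∈ Icc 1 (n + 5 - a - 2), ∑ c ∈ Icc 1 (n + 5 - a - b - 1),
        f a b c (n + 5 - a - b - c)
      = ∑ i ∈ range (n + 1), ∑ j ∈ range (n - i + 1), ∑ l ∈ range (n - i - j + 1),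
          f (i + 2) (j + 1) (l + 1) (n - i - j - l + 1) := by
  rw [show n + 5 - 3 = n + 2 by omega, sum_Icc_add]
  refine sum_congr rfl fun i hi => ?_
  have hin := mem_range.1 hi
  rw [show n + 5 - (i + 2) - 2 = n - i + 1 by omega, sum_Icc_add]
  refine sum_congr rfl fun j hj => ?_
  have hjn := mem_range.1 hj
  rw [show n + 5 - (i + 2) - (j + 1) - 1 = n - i - j + 1 by omega, sum_Icc_add]
  refine sum_congr rfl fun l hl => ?_
  have hln := mem_range.1 hl
  congr 1
  omega

/-- The factors `2 ^ c` move the pole of the third series from `k₃` to its half. -/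
lemma sum_Icc_two_pow_div (k₁ k₂ k₃ k₄ : ℝ) (n : ℕ) :
    ∑ a ∈ Icc 2 (n + 5 - 3), ∑ b ∈ Icc 1 (n + 5 - a - 2), ∑ c ∈ Icc 1 (n + 5 - a - b - 1),
        (2 : ℝ) ^ c * (1 / (k₁ ^ a * k₂ ^ b * k₃ ^ c * k₄ ^ (n + 5 - a - b - c)))
      = 1 / k₁ * PowerSeries.coeff n (poleSeries k₁ *
          (poleSeries k₂ * (poleSeries (k₃ / 2) * poleSeries k₄))) := by
  rw [sum_Icc_weight fun a b c d => (2 : ℝ) ^ c * (1 / (k₁ ^ a * k₂ ^ b * k₃ ^ c * k₄ ^ d))]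
  simp only [coeff_poleSeries_mul, coeff_poleSeries, mul_sum]
  refine sum_congr rfl fun i _ => sum_congr rfl fun j _ => sum_congr rfl fun l _ => ?_
  simp only [div_pow, one_div, mul_inv, inv_div]
  ring

/-! ### Absolute convergence -/

/-- Spreading `K⁻¹ = (K^(-1/4))^4` over the four factors. -/
lemma one_div_mul_le_rpow {K a b c d : ℝ} (ha : 0 ≤ a) (hb : 0 ≤ b) (hc : 0 ≤ c) (hd : 0 ≤ d)
    (haK : a ≤ K) (hbK : b ≤ K) (hcK : c ≤ K) (hdK : d ≤ K) :
    1 / (K * (a * b * c * d))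
      ≤ a ^ (-(5 / 4) : ℝ) * (b ^ (-(5 / 4) : ℝ) * (c ^ (-(5 / 4) : ℝ) * d ^ (-(5 / 4) : ℝ))) := by
  rcases eq_or_ne (a * b * c * d) 0 with h0 | h0
  · rw [h0, mul_zero, div_zero]
    positivity
  simp only [mul_ne_zero_iff] at h0
  obtain ⟨⟨⟨ha0, hb0⟩, hc0⟩, hd0⟩ := h0
  have hK : 0 < K := (ha.lt_of_ne' ha0).trans_le haK
  have hfactor : ∀ z : ℝ, 0 ≤ z → z ≠ 0 → z ≤ K →
      1 / z * K ^ (-(1 / 4) : ℝ) ≤ z ^ (-(5 / 4) : ℝ) := fun z hz hz0 hzK => by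
    have hzpos := hz.lt_of_ne' hz0
    rw [show (-(5 / 4) : ℝ) = -1 + -(1 / 4) by norm_num, Real.rpow_add hzpos, Real.rpow_neg_one,
      one_div z]
    exact mul_le_mul_of_nonneg_left (Real.rpow_le_rpow_of_nonpos hzpos hzK (by norm_num))
      (inv_nonneg.2 hz)
  have hKinv : K ^ (-(1 / 4) : ℝ)
      * (K ^ (-(1 / 4) : ℝ) * (K ^ (-(1 / 4) : ℝ) * K ^ (-(1 / 4) : ℝ))) = 1 / K := by
    rw [← Real.rpow_add hK, ← Real.rpow_add hK, ← Real.rpow_add hK]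
    norm_num [Real.rpow_neg_one]
  calc 1 / (K * (a * b * c * d))
      = 1 / a * K ^ (-(1 / 4) : ℝ) * (1 / b * K ^ (-(1 / 4) : ℝ)
          * (1 / c * K ^ (-(1 / 4) : ℝ) * (1 / d * K ^ (-(1 / 4) : ℝ)))) := by
        rw [← one_div_mul_one_div, ← hKinv]
        field_simp
    _ ≤ _ := by
        gcongr
        exacts [hfactor a ha ha0 haK, hfactor b hb hb0 hbK, hfactor c hc hc0 hcK,
          hfactor d hd hd0 hdK]

lemma summable_of_abs_le_one_div {ι : Type*} {φ : ι → ℤ × ℤ × ℤ × ℤ} (hφ : Function.Injective φ)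
    {K f : ι → ℝ} (h₁ : ∀ t, |((φ t).1 : ℝ)| ≤ K t) (h₂ : ∀ t, |((φ t).2.1 : ℝ)| ≤ K t)
    (h₃ : ∀ t, |((φ t).2.2.1 : ℝ)| ≤ K t) (h₄ : ∀ t, |((φ t).2.2.2 : ℝ)| ≤ K t)
    (hf : ∀ t, |f t| ≤ 1 / (K t * (|((φ t).1 : ℝ)| * |((φ t).2.1 : ℝ)| * |((φ t).2.2.1 : ℝ)|
      * |((φ t).2.2.2 : ℝ)|))) : Summable f := by
  have h := Real.summable_abs_int_rpow (b := 5 / 4) (by norm_num)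
  have hpos : ∀ z : ℤ, 0 ≤ |(z : ℝ)| ^ (-(5 / 4) : ℝ) := fun z => by positivity
  have hprod := h.mul_of_nonneg
    (h.mul_of_nonneg (h.mul_of_nonneg h hpos hpos) hpos fun p => mul_nonneg (hpos _) (hpos _))
    hpos fun p => mul_nonneg (hpos _) (mul_nonneg (hpos _) (hpos _))
  refine Summable.of_norm_bounded (hprod.comp_injective hφ) fun t => (hf t).trans ?_
  exact one_div_mul_le_rpow (abs_nonneg _) (abs_nonneg _) (abs_nonneg _) (abs_nonneg _)
    (h₁ t) (h₂ t) (h₃ t) (h₄ t)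

lemma summable_of_abs_le_one_div_add_one {f : ℕ × ℕ × ℕ × ℕ → ℝ}
    (hf : ∀ x y r s : ℕ, |f (x, y, r, s)| ≤ 1 / (((x : ℝ) + y + r + s + 4)
      * (((x : ℝ) + 1) * ((y : ℝ) + 1) * ((r : ℝ) + 1) * ((s : ℝ) + 1)))) : Summable f := by
  let φ : ℕ × ℕ × ℕ × ℕ → ℤ × ℤ × ℤ × ℤ := fun t =>
    (((t.1 + 1 : ℕ) : ℤ), ((t.2.1 + 1 : ℕ) : ℤ), ((t.2.2.1 + 1 : ℕ) : ℤ), ((t.2.2.2 + 1 : ℕ) : ℤ))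
  have hφ : Function.Injective φ := fun t t' h => by
    simp only [φ, Prod.mk.injEq, Nat.cast_inj, Nat.add_right_cancel_iff] at h
    ext <;> tauto
  refine summable_of_abs_le_one_div hφ (K := fun t => (t.1 : ℝ) + t.2.1 + t.2.2.1 + t.2.2.2 + 4)
    ?_ ?_ ?_ ?_ ?_ <;> rintro ⟨x, y, r, s⟩ <;>
    simp only [φ, Int.cast_natCast, Nat.abs_cast] <;> push_cast
  on_goal 5 => exact hf x y r s
  all_goals (norm_cast; omega)

lemma summable_of_abs_le_one_div_abs_sub {f : ℕ × ℕ × ℕ × ℕ → ℝ}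
    (hf : ∀ x y r s : ℕ, |f (x, y, r, s)| ≤ 1 / (((x : ℝ) + y + r + s + 4)
      * (((x : ℝ) + 1) * |(y : ℝ) - x| * ((r : ℝ) + 1) * ((s : ℝ) + 1)))) : Summable f := by
  let φ : ℕ × ℕ × ℕ × ℕ → ℤ × ℤ × ℤ × ℤ := fun t =>
    (((t.1 + 1 : ℕ) : ℤ), (t.2.1 : ℤ) - (t.1 : ℤ), ((t.2.2.1 + 1 : ℕ) : ℤ), ((t.2.2.2 + 1 : ℕ) : ℤ))
  have hφ : Function.Injective φ := fun t t' h => by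
    simp only [φ, Prod.mk.injEq, Nat.cast_inj, Nat.add_right_cancel_iff] at h
    ext <;> omega
  refine summable_of_abs_le_one_div hφ (K := fun t => (t.1 : ℝ) + t.2.1 + t.2.2.1 + t.2.2.2 + 4)
    ?_ ?_ ?_ ?_ ?_ <;> rintro ⟨x, y, r, s⟩ <;>
    simp only [φ, Int.cast_sub, Int.cast_natCast, Nat.abs_cast] <;> push_cast
  on_goal 5 => exact hf x y r s
  on_goal 2 => rw [abs_le]; constructor <;> linarith [x.cast_nonneg (α := ℝ),
    y.cast_nonneg (α := ℝ), r.cast_nonneg (α := ℝ), s.cast_nonneg (α := ℝ)]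
  all_goals (norm_cast; omega)

lemma summable_mzv_four {a b c d : ℕ} (ha : 2 ≤ a) (hb : 1 ≤ b) (hc : 1 ≤ c) (hd : 1 ≤ d) :
    Summable fun t : ℕ × ℕ × ℕ × ℕ => 1 / (((t.1 : ℝ) + t.2.1 + t.2.2.1 + t.2.2.2 + 4) ^ a
      * ((t.1 : ℝ) + t.2.1 + t.2.2.1 + 3) ^ b * ((t.1 : ℝ) + t.2.1 + 2) ^ c
      * ((t.1 : ℝ) + 1) ^ d) := by
  refine summable_of_abs_le_one_div_add_one fun x y r s => ?_
  rw [abs_of_nonneg (by positivity)]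
  refine one_div_le_one_div_of_le (by positivity) ?_
  calc ((x : ℝ) + y + r + s + 4) * (((x : ℝ) + 1) * ((y : ℝ) + 1) * ((r : ℝ) + 1) * ((s : ℝ) + 1))
      = ((x : ℝ) + y + r + s + 4) * ((s : ℝ) + 1) * ((r : ℝ) + 1) * ((y : ℝ) + 1)
          * ((x : ℝ) + 1) := by ring
    _ ≤ ((x : ℝ) + y + r + s + 4) ^ 2 * ((x : ℝ) + y + r + 3) ^ 1 * ((x : ℝ) + y + 2) ^ 1
          * ((x : ℝ) + 1) ^ 1 := by
        rw [sq, pow_one, pow_one, pow_one]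
        gcongr <;> norm_cast <;> omega
    _ ≤ _ := by
        gcongr <;> norm_cast <;> omega

lemma hasSum_mzv_four {a b c d : ℕ} (ha : 2 ≤ a) (hb : 1 ≤ b) (hc : 1 ≤ c) (hd : 1 ≤ d) :
    HasSum (fun t : ℕ × ℕ × ℕ × ℕ => 1 / (((t.1 : ℝ) + t.2.1 + t.2.2.1 + t.2.2.2 + 4) ^ a
      * ((t.1 : ℝ) + t.2.1 + t.2.2.1 + 3) ^ b * ((t.1 : ℝ) + t.2.1 + 2) ^ c
      * ((t.1 : ℝ) + 1) ^ d)) (mzv ![a, b, c, d]) := by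
  have hsum := summable_mzv_four ha hb hc hd
  have hterm := fun t : ℕ × ℕ × ℕ × ℕ =>
    show 1 / (((t.1 : ℝ) + t.2.1 + t.2.2.1 + t.2.2.2 + 4) ^ a
      * ((t.1 : ℝ) + t.2.1 + t.2.2.1 + 3) ^ b * ((t.1 : ℝ) + t.2.1 + 2) ^ c
      * ((t.1 : ℝ) + 1) ^ d)
      = ∏ i, (1 : ℝ) / ((indexEquivFour t).1 i : ℝ) ^ (![a, b, c, d] i) by
    simp [indexEquivFour, Fin.prod_univ_four]
  simp only [hterm] at hsum ⊢
  exact hasSum_mzv _ _ hsum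

/-! ### The residues of the symmetrised generating function -/

/-- The weighted sum `∑ 2^c ζ(a, b, c, d)` over all `a + b + c + d = w` with `a ≥ 2`. -/
noncomputable def weightedSum (w : ℕ) : ℝ :=
  ∑ a ∈ Icc 2 (w - 3), ∑ b ∈ Icc 1 (w - a - 2), ∑ c ∈ Icc 1 (w - a - b - 1),
    (2 : ℝ) ^ c * mzv ![a, b, c, w - a - b - c]

/-- The summand of `weightedSum (n + 5)` at `(k₁, k₂, k₃, k₄) = (x + y + r + s + 4, x + y + r + 3,
x + y + 2, x + 1)`, averaged over the exchange of `x` and `y`. -/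
noncomputable def symmetrizedSummand (n : ℕ) : ℕ × ℕ × ℕ × ℕ → ℝ
  | (x, y, r, s) => 1 / ((x : ℝ) + y + r + s + 4)
      * PowerSeries.coeff n (poleSeries ((x : ℝ) + y + r + s + 4)
        * (poleSeries ((x : ℝ) + y + r + 3)
          * (poleSeries ((y : ℝ) + 1) * poleSeries ((x : ℝ) + 1))))

lemma hasSum_weightedSum (n : ℕ) :
    HasSum (fun t : ℕ × ℕ × ℕ × ℕ => 1 / ((t.1 : ℝ) + t.2.1 + t.2.2.1 + t.2.2.2 + 4)
      * PowerSeries.coeff n (poleSeries ((t.1 : ℝ) + t.2.1 + t.2.2.1 + t.2.2.2 + 4)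
        * (poleSeries ((t.1 : ℝ) + t.2.1 + t.2.2.1 + 3)
          * (poleSeries (((t.1 : ℝ) + t.2.1 + 2) / 2) * poleSeries ((t.1 : ℝ) + 1)))))
      (weightedSum (n + 5)) := by
  have h := hasSum_sum fun a (ha : a ∈ Icc 2 (n + 5 - 3)) =>
    hasSum_sum fun b (hb : b ∈ Icc 1 (n + 5 - a - 2)) =>
    hasSum_sum fun c (hc : c ∈ Icc 1 (n + 5 - a - b - 1)) =>
      (hasSum_mzv_four (mem_Icc.1 ha).1 (mem_Icc.1 hb).1 (mem_Icc.1 hc).1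
        (show 1 ≤ n + 5 - a - b - c by simp only [mem_Icc] at ha hb hc; omega)).mul_left
          ((2 : ℝ) ^ c)
  exact h.congr_fun fun t => (sum_Icc_two_pow_div _ _ _ _ n).symm

lemma hasSum_symmetrizedSummand (n : ℕ) :
    HasSum (symmetrizedSummand n) (weightedSum (n + 5)) := by
  have h := hasSum_weightedSum n
  refine hasSum_of_eq ((h.add (hasSum_swap h)).div_const 2) ?_ (add_self_div_two _).symm
  rintro ⟨x, y, r, s⟩
  have hmid := poleSeries_midpoint_mul (K := ℝ) (p := (x : ℝ) + 1) (q := (y : ℝ) + 1)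
    (by positivity) (by positivity) (by positivity)
  have hcoeff := congr_arg (fun φ => PowerSeries.coeff n (poleSeries ((x : ℝ) + y + r + s + 4)
    * (poleSeries ((x : ℝ) + y + r + 3) * φ))) hmid
  rw [show (x : ℝ) + 1 + (y + 1) = x + y + 2 by ring] at hcoeff
  simp only [mul_add, map_add, two_mul] at hcoeff
  simp only [symmetrizedSummand, add_comm (y : ℝ) x, mul_comm (poleSeries ((y : ℝ) + 1))]
  linear_combination -(1 / ((x : ℝ) + y + r + s + 4)) / 2 * hcoeff

/-- The contribution of the pole at `k₁` to `symmetrizedSummand`, up to sign. -/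
noncomputable def outerResidue (n : ℕ) : ℕ × ℕ × ℕ × ℕ → ℝ
  | (x, y, r, s) => 1 / (((x : ℝ) + y + r + s + 4) ^ (n + 2)
      * (((s : ℝ) + 1) * ((y : ℝ) + r + s + 3) * ((x : ℝ) + r + s + 3)))

/-- The contribution of the pole at `k₂` to `symmetrizedSummand`. -/
noncomputable def innerResidue (n : ℕ) : ℕ × ℕ × ℕ × ℕ → ℝ
  | (x, y, r, s) => 1 / (((x : ℝ) + y + r + s + 4) * ((x : ℝ) + y + r + 3) ^ (n + 1)
      * (((s : ℝ) + 1) * ((y : ℝ) + r + 2) * ((x : ℝ) + r + 2)))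

/-- The contribution of the pole at `x + 1` to `symmetrizedSummand` for `x ≠ y`; it is zero for
`x = y` because of the convention `1 / 0 = 0`. -/
noncomputable def sideResidue (n : ℕ) : ℕ × ℕ × ℕ × ℕ → ℝ
  | (x, y, r, s) => 1 / (((x : ℝ) + y + r + s + 4) * ((x : ℝ) + 1) ^ (n + 1)
      * (((y : ℝ) - x) * ((y : ℝ) + r + s + 3) * ((y : ℝ) + r + 2)))

/-- The contribution of the double pole at `x + 1` to `symmetrizedSummand` for `x = y`. -/
noncomputable def doubleResidue (n : ℕ) : ℕ × ℕ × ℕ → ℝ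
  | (x, r, s) => 1 / ((2 * (x : ℝ) + r + s + 4) * (((x : ℝ) + r + s + 3) * ((x : ℝ) + r + 2)))
      * (((n : ℝ) + 1) / ((x : ℝ) + 1) ^ (n + 2)
        - 1 / ((x : ℝ) + 1) ^ (n + 1) * (1 / ((x : ℝ) + r + s + 3) + 1 / ((x : ℝ) + r + 2)))

lemma symmetrizedSummand_of_ne (n : ℕ) {x y : ℕ} (hxy : x ≠ y) (r s : ℕ) :
    symmetrizedSummand n (x, y, r, s) = innerResidue n (x, y, r, s) - outerResidue n (x, y, r, s)
      + sideResidue n (x, y, r, s) + sideResidue n (y, x, r, s) := by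
  have hyx : (y : ℝ) - x ≠ 0 := sub_ne_zero.2 (Nat.cast_injective.ne hxy.symm)
  have hab : (x : ℝ) + y + r + s + 4 - (x + y + r + 3) = s + 1 := by ring
  have hap : (x : ℝ) + y + r + s + 4 - (y + 1) = x + r + s + 3 := by ring
  have haq : (x : ℝ) + y + r + s + 4 - (x + 1) = y + r + s + 3 := by ring
  have hbp : (x : ℝ) + y + r + 3 - (y + 1) = x + r + 2 := by ring
  have hbq : (x : ℝ) + y + r + 3 - (x + 1) = y + r + 2 := by ring
  have hpq : (y : ℝ) + 1 - (x + 1) = y - x := by ring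
  rw [symmetrizedSummand, poleSeries_mul_of_ne, hab, hap, haq, hbp, hbq, hpq]
  · simp only [map_add, map_sub, PowerSeries.coeff_smul, coeff_poleSeries, innerResidue,
      outerResidue, sideResidue, smul_eq_mul, ← neg_sub (y : ℝ) x]
    generalize (y : ℝ) - x = z
    simp only [one_div, mul_inv, pow_succ]
    ring
  any_goals rw [← sub_ne_zero]
  all_goals simp only [hab, hap, haq, hbp, hbq, hpq, sub_zero]
  any_goals positivity

lemma symmetrizedSummand_self (n x r s : ℕ) :
    symmetrizedSummand n (x, x, r, s) = innerResidue n (x, x, r, s) - outerResidue n (x, x, r, s)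
      + doubleResidue n (x, r, s) := by
  have hab : (x : ℝ) + x + r + s + 4 - (x + x + r + 3) = s + 1 := by ring
  have hap : (x : ℝ) + x + r + s + 4 - (x + 1) = x + r + s + 3 := by ring
  have hbp : (x : ℝ) + x + r + 3 - (x + 1) = x + r + 2 := by ring
  rw [symmetrizedSummand, poleSeries_mul_sq_of_ne, hab, hap, hbp]
  · simp only [map_add, map_sub, PowerSeries.coeff_smul, coeff_poleSeries,
      coeff_poleSeries_mul_self, innerResidue, outerResidue, doubleResidue, smul_eq_mul]
    simp only [div_eq_mul_inv, mul_inv, pow_succ]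
    ring
  any_goals rw [← sub_ne_zero]
  all_goals simp only [hab, hap, hbp, sub_zero]
  all_goals positivity

lemma sideResidue_self (n x r s : ℕ) : sideResidue n (x, x, r, s) = 0 := by
  simp [sideResidue]

lemma summable_outerResidue (n : ℕ) : Summable (outerResidue n) := by
  refine summable_of_abs_le_one_div_add_one fun x y r s => ?_
  rw [outerResidue, abs_of_nonneg (by positivity)]
  refine one_div_le_one_div_of_le (by positivity) ?_
  calc ((x : ℝ) + y + r + s + 4) * (((x : ℝ) + 1) * ((y : ℝ) + 1) * ((r : ℝ) + 1) * ((s : ℝ) + 1))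
      = ((x : ℝ) + y + r + s + 4) * ((r : ℝ) + 1)
          * (((s : ℝ) + 1) * ((y : ℝ) + 1) * ((x : ℝ) + 1)) := by ring
    _ ≤ ((x : ℝ) + y + r + s + 4) ^ 2
          * (((s : ℝ) + 1) * ((y : ℝ) + r + s + 3) * ((x : ℝ) + r + s + 3)) := by
        rw [sq]
        gcongr <;> norm_cast <;> omega
    _ ≤ _ := by
        gcongr <;> norm_cast <;> omega

lemma summable_innerResidue (n : ℕ) : Summable (innerResidue n) := by
  refine summable_of_abs_le_one_div_add_one fun x y r s => ?_
  rw [innerResidue, abs_of_nonneg (by positivity)]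
  refine one_div_le_one_div_of_le (by positivity) ?_
  calc ((x : ℝ) + y + r + s + 4) * (((x : ℝ) + 1) * ((y : ℝ) + 1) * ((r : ℝ) + 1) * ((s : ℝ) + 1))
      = ((x : ℝ) + y + r + s + 4) * ((r : ℝ) + 1)
          * (((s : ℝ) + 1) * ((y : ℝ) + 1) * ((x : ℝ) + 1)) := by ring
    _ ≤ ((x : ℝ) + y + r + s + 4) * ((x : ℝ) + y + r + 3)
          * (((s : ℝ) + 1) * ((y : ℝ) + r + 2) * ((x : ℝ) + r + 2)) := by
        gcongr <;> norm_cast <;> omega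
    _ ≤ _ := by
        gcongr
        exact le_self_pow₀ (by norm_cast; omega) n.succ_ne_zero

lemma summable_sideResidue (n : ℕ) : Summable (sideResidue n) := by
  refine summable_of_abs_le_one_div_abs_sub fun x y r s => ?_
  rcases eq_or_ne x y with rfl | hxy
  · simp [sideResidue_self]
  have hyx : 0 < |(y : ℝ) - x| := abs_pos.2 (sub_ne_zero.2 (Nat.cast_injective.ne hxy.symm))
  have habs : |sideResidue n (x, y, r, s)| = 1 / (((x : ℝ) + y + r + s + 4)
      * ((x : ℝ) + 1) ^ (n + 1) * (|(y : ℝ) - x| * ((y : ℝ) + r + s + 3) * ((y : ℝ) + r + 2))) := by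
    rw [sideResidue, abs_div, abs_one, abs_mul, abs_mul _ ((y : ℝ) + r + 2),
      abs_mul ((y : ℝ) - x), abs_of_nonneg (by positivity),
      abs_of_nonneg (a := (y : ℝ) + r + s + 3) (by positivity),
      abs_of_nonneg (a := (y : ℝ) + r + 2) (by positivity)]
  rw [habs]
  refine one_div_le_one_div_of_le (by positivity) ?_
  calc ((x : ℝ) + y + r + s + 4) * (((x : ℝ) + 1) * |(y : ℝ) - x| * ((r : ℝ) + 1) * ((s : ℝ) + 1))
      = ((x : ℝ) + y + r + s + 4) * ((x : ℝ) + 1)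
          * (|(y : ℝ) - x| * ((s : ℝ) + 1) * ((r : ℝ) + 1)) := by ring
    _ ≤ ((x : ℝ) + y + r + s + 4) * ((x : ℝ) + 1) ^ (n + 1)
          * (|(y : ℝ) - x| * ((y : ℝ) + r + s + 3) * ((y : ℝ) + r + 2)) := by
        gcongr
        · exact le_self_pow₀ (by norm_cast; omega) n.succ_ne_zero
        all_goals norm_cast <;> omega

lemma hasSum_doubleResidue {n : ℕ} {I O S : ℝ} (hI : HasSum (innerResidue n) I)
    (hO : HasSum (outerResidue n) O) (hS : HasSum (sideResidue n) S) :
    HasSum (doubleResidue n) (weightedSum (n + 5) - (I - O + S + S)) := by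
  have h := (hasSum_symmetrizedSummand n).sub (((hI.sub hO).add hS).add (hasSum_swap hS))
  refine ((hasSum_diagonal_iff ?_).2 h).congr_fun ?_
  · rintro ⟨x, y, r, s⟩ hxy
    rw [symmetrizedSummand_of_ne n hxy, sub_self]
  · rintro ⟨x, r, s⟩
    rw [symmetrizedSummand_self, sideResidue_self]
    ring

/-! ### Summing the residues -/

/-- The coefficient of `1 / (m + 1) ^ (n + 2)` in the sum of `innerResidue n - outerResidue n`,
grouped by the value `m + 1` of the pole. -/
noncomputable def innerOuterCoeff (m : ℕ) : ℝ :=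
  ∑ l ∈ range m, (H 1 (m + 1) - H 1 l) * (2 * (H 1 m - H 1 (l + 1)) / ((m : ℝ) + l + 2))

/-- The coefficient of `1 / (m + 1) ^ (n + 2)` in the sum of `sideResidue n`, grouped by the value
`m + 1` of the pole. -/
noncomputable def sideCoeff (m : ℕ) : ℝ :=
  ∑ l ∈ range (m + 1), (H 1 (m + 1) - H 1 l)
    * ((H 1 (l + 1) - H 1 m + 1 / ((m : ℝ) + l + 2)) / ((m : ℝ) + l + 2))

/-- The coefficient of `1 / (m + 1) ^ (n + 2)` in the sum of `doubleResidue n`, grouped by the value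
`m + 1` of the pole. -/
noncomputable def doubleCoeff (n m : ℕ) : ℝ :=
  ((n : ℝ) + 1) * W 1 1 (m + 1) (m + 1) / ((m : ℝ) + 1)
    - (mzv ![3] - ∑ k ∈ range (m + 1), H 1 k / ((k : ℝ) + 1) ^ 2
      - W 1 1 (m + 1) (m + 1) / ((m : ℝ) + 1) - W 2 1 (m + 1) (m + 1))

lemma innerOuterCoeff_add_two_mul_sideCoeff (m : ℕ) :
    innerOuterCoeff m + 2 * sideCoeff m
      = 1 / ((m : ℝ) + 1) ^ 3 + 2 * W 1 2 (m + 1) (m + 1) := by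
  have hcancel : ∀ l ∈ range m,
      (H 1 (m + 1) - H 1 l) * (2 * (H 1 m - H 1 (l + 1)) / ((m : ℝ) + l + 2))
        = 2 * ((H 1 (m + 1) - H 1 l) * (1 / (((m + 1 : ℕ) : ℝ) + l + 1) ^ 2))
          - 2 * ((H 1 (m + 1) - H 1 l)
            * ((H 1 (l + 1) - H 1 m + 1 / ((m : ℝ) + l + 2)) / ((m : ℝ) + l + 2))) := fun l _ => by
    push_cast
    rw [show (m : ℝ) + 1 + l + 1 = m + l + 2 by ring]
    field_simp
    ring
  rw [incrementSum_one_left, innerOuterCoeff, sideCoeff, sum_congr rfl hcancel, sum_sub_distrib,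
    ← mul_sum, ← mul_sum, sum_range_succ, sum_range_succ _ m, harmonicSum_succ 1 m]
  push_cast
  field_simp
  ring

lemma hasSum_harmonicSum_of_innerResidue {n : ℕ} {I : ℝ} (hI : HasSum (innerResidue n) I) :
    HasSum (fun p : (ℕ × ℕ) × ℕ => H 1 (p.1.1 + p.1.2 + p.2 + 3)
      / (((p.1.1 : ℝ) + p.1.2 + p.2 + 3) ^ (n + 2)
        * (((p.1.2 : ℝ) + p.2 + 2) * ((p.1.1 : ℝ) + p.2 + 2)))) I := by
  let e : ((ℕ × ℕ) × ℕ) × ℕ ≃ ℕ × ℕ × ℕ × ℕ :=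
    (Equiv.prodAssoc (ℕ × ℕ) ℕ ℕ).trans (Equiv.prodAssoc ℕ ℕ (ℕ × ℕ))
  refine (e.hasSum_iff.2 hI).prod_fiberwise fun ⟨⟨x, y⟩, l⟩ => ?_
  have h := (hasSum_telescoping 0 (Nat.succ_ne_zero (x + y + l + 2))).mul_left
    (1 / (((x : ℝ) + y + l + 3) ^ (n + 1) * (((y : ℝ) + l + 2) * ((x : ℝ) + l + 2))))
  refine hasSum_of_eq h (fun s => ?_) ?_
  · change innerResidue n (x, y, l, s) = _
    rw [innerResidue, one_div_mul_one_div]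
    push_cast
    ring_nf
  · rw [harmonicSum_zero, sub_zero, zero_add, pow_succ]
    push_cast
    rw [show (x : ℝ) + y + l + 2 + 1 = x + y + l + 3 by ring]
    field_simp

lemma hasSum_harmonicSum_of_outerResidue {n : ℕ} {O : ℝ} (hO : HasSum (outerResidue n) O) :
    HasSum (fun p : (ℕ × ℕ) × ℕ => H 1 p.2
      / (((p.1.1 : ℝ) + p.1.2 + p.2 + 3) ^ (n + 2)
        * (((p.1.2 : ℝ) + p.2 + 2) * ((p.1.1 : ℝ) + p.2 + 2)))) O := by
  let e : (ℕ × ℕ) × ℕ × ℕ ≃ ℕ × ℕ × ℕ × ℕ :=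
    (Equiv.prodCongr (Equiv.refl _) (Equiv.prodComm ℕ ℕ)).trans (Equiv.prodAssoc ℕ ℕ (ℕ × ℕ))
  let g : ℕ × ℕ → ℕ → ℕ → ℝ := fun p l s => 1 / ((s : ℝ) + 1)
    / (((p.1 : ℝ) + p.2 + l + 3) ^ (n + 2) * (((p.2 : ℝ) + l + 2) * ((p.1 : ℝ) + l + 2)))
  have h := hasSum_prod_sum_range (g := g) ((e.hasSum_iff.2 hO).congr_fun fun ⟨⟨x, y⟩, s, r⟩ => ?_)
  · refine h.congr_fun fun p => ?_
    rw [← sum_div, harmonicSum]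
    simp only [pow_one]
  · change _ = outerResidue n (x, y, r, s)
    simp only [g, outerResidue]
    rw [div_div]
    push_cast
    ring_nf

lemma hasSum_innerOuterCoeff {n : ℕ} {I O : ℝ} (hI : HasSum (innerResidue n) I)
    (hO : HasSum (outerResidue n) O) :
    HasSum (fun m : ℕ => innerOuterCoeff m / ((m : ℝ) + 1) ^ (n + 2)) (I - O) := by
  let K : ℕ → ℕ → ℝ := fun l j =>
    (H 1 (j + l + 2) - H 1 l) / ((j : ℝ) + l + 2) ^ (n + 2)
  let g : ℕ → ℕ → ℕ → ℝ := fun l j x =>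
    K l j * (1 / (((j : ℝ) - x + (l + 1 : ℕ)) * ((x : ℝ) + (l + 1 : ℕ) + 1)))
  have hxyl := (Equiv.prodComm ℕ (ℕ × ℕ)).hasSum_iff.2
    ((hasSum_harmonicSum_of_innerResidue hI).sub (hasSum_harmonicSum_of_outerResidue hO))
  have hlj := hasSum_prod_sum_range (g := g) (hxyl.congr_fun fun ⟨l, x, y⟩ => ?_)
  · have hm := hasSum_sum_range (g := fun m l => (H 1 (m + 1) - H 1 l)
      * (2 * (H 1 m - H 1 (l + 1)) / ((m : ℝ) + l + 2)) / ((m : ℝ) + 1) ^ (n + 2))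
      (hlj.congr_fun fun ⟨l, j⟩ => ?_)
    · exact hm.congr_fun fun m => sum_div ..
    · simp only [g]
      rw [← mul_sum, sum_range_one_div_mul_reflect, show l + 1 + j = l + j + 1 by ring]
      simp only [K]
      rw [show j + l + 2 = l + j + 1 + 1 by ring]
      push_cast
      rw [show (j : ℝ) + l + 2 = l + j + 1 + 1 by ring,
        show (j : ℝ) + (l + 1) + (l + 1) + 1 = l + j + 1 + l + 2 by ring]
      ring
  · simp only [g, K, Function.comp_apply, Equiv.prodComm_apply, Prod.swap]
    rw [show x + y + 1 + l + 2 = x + y + l + 3 by ring, ← sub_div, div_mul_div_comm, mul_one]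
    push_cast
    ring_nf

lemma hasSum_sideCoeff {n : ℕ} {S : ℝ} (hS : HasSum (sideResidue n) S) :
    HasSum (fun m : ℕ => sideCoeff m / ((m : ℝ) + 1) ^ (n + 2)) S := by
  refine hS.prod_fiberwise fun x => ?_
  have hy : HasSum (fun y : ℕ => 1 / ((y : ℝ) - x) * W 1 1 (y + 1) (x + 1)) (sideCoeff x) := by
    simp only [incrementSum_one_left, mul_sum]
    refine hasSum_sum fun l _ => ?_
    refine hasSum_of_eq ((hasSum_one_div_sub_mul x (l + 1)).mul_left (H 1 (x + 1) - H 1 l))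
      (fun y => ?_) ?_
    · push_cast
      rw [← one_div_mul_one_div]
      ring
    · push_cast
      ring
  refine hasSum_prod_of_fiberwise (hS.summable.prod_factor x) (fun y => ?_)
    (hy.div_const (((x : ℝ) + 1) ^ (n + 2)))
  refine hasSum_of_eq ((hasSum_telescoping_double (y + 1) (Nat.succ_ne_zero x)).mul_left
    (1 / (((y : ℝ) - x) * ((x : ℝ) + 1) ^ (n + 1)))) (fun p => ?_) ?_
  · rw [sideResidue, one_div_mul_one_div]
    push_cast
    ring_nf
  · push_cast
    simp only [div_eq_mul_inv, mul_inv, pow_succ]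
    ring

lemma hasSum_doubleCoeff {n : ℕ} {D : ℝ} (hD : HasSum (doubleResidue n) D) :
    HasSum (fun m : ℕ => doubleCoeff n m / ((m : ℝ) + 1) ^ (n + 2)) D := by
  refine hD.prod_fiberwise fun x => ?_
  have h := ((hasSum_telescoping_double (x + 1) (Nat.succ_ne_zero x)).mul_left
      (((n : ℝ) + 1) / ((x : ℝ) + 1) ^ (n + 2))).sub
    ((hasSum_telescoping_double_sq (x + 1) (Nat.succ_ne_zero x)).mul_left
      (1 / ((x : ℝ) + 1) ^ (n + 1)))
  refine hasSum_of_eq h (fun p => ?_) ?_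
  · simp only [doubleResidue]
    push_cast
    rw [show 2 * (x : ℝ) + p.1 + p.2 + 4 = x + 1 + p.1 + p.2 + 2 + (x + 1) by ring,
      show (x : ℝ) + p.1 + p.2 + 3 = x + 1 + p.1 + p.2 + 2 by ring,
      show (x : ℝ) + p.1 + 2 = x + 1 + p.1 + 1 by ring]
    ring
  · rw [doubleCoeff]
    push_cast
    field_simp
    ring

lemma innerOuterCoeff_add_two_mul_sideCoeff_add_doubleCoeff (n m : ℕ) :
    innerOuterCoeff m + 2 * sideCoeff m + doubleCoeff n m
      = ((n : ℝ) + 4) / 2 * (1 / ((m : ℝ) + 1) ^ 3) + ((n : ℝ) + 2) / 2 * (H 2 m / ((m : ℝ) + 1))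
        - (mzv ![3] - H 3 (m + 1)) := by
  rw [innerOuterCoeff_add_two_mul_sideCoeff, doubleCoeff, incrementSum_one_one_diag,
    eq_sub_of_add_eq (two_mul_incrementSum_one_two_add_incrementSum_two_one_diag (m + 1)),
    harmonicSum_succ 2 m]
  field_simp
  ring

lemma weightedSum_eq (n : ℕ) :
    weightedSum (n + 5) = ((n : ℝ) + 4) / 2 * mzv ![n + 5] + ((n : ℝ) + 2) / 2 * mzv ![n + 3, 2]
      - mzv ![3, n + 2] := by
  have hI := (summable_innerResidue n).hasSum
  have hO := (summable_outerResidue n).hasSum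
  have hS := (summable_sideResidue n).hasSum
  have hresidues := ((hasSum_innerOuterCoeff hI hO).add ((hasSum_sideCoeff hS).mul_left 2)).add
    (hasSum_doubleCoeff (hasSum_doubleResidue hI hO hS))
  have hzeta := (((hasSum_mzv_one (a := n + 5) (by omega)).mul_left (((n : ℝ) + 4) / 2)).add
    ((hasSum_mzv_two_fst (a := n + 3) (b := 2) (by omega) (by omega)).mul_left
      (((n : ℝ) + 2) / 2))).sub
    (hasSum_mzv_two_snd (a := 3) (b := n + 2) (by omega) (by omega))
  refine (hasSum_of_eq hresidues (fun m => ?_) (by ring)).unique hzeta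
  calc
    _ = (((n : ℝ) + 4) / 2 * (1 / ((m : ℝ) + 1) ^ 3) + ((n : ℝ) + 2) / 2 * (H 2 m / ((m : ℝ) + 1))
        - (mzv ![3] - H 3 (m + 1))) / ((m : ℝ) + 1) ^ (n + 2) := by
      field_simp
      ring
    _ = _ := by
      rw [← innerOuterCoeff_add_two_mul_sideCoeff_add_doubleCoeff]
      ring

end MultipleZeta

theorem weighted_sum_depth4_2c (w : ℕ) (hw : 5 ≤ w)
    (q u : ℕ) (hq : q = w - 3) (hu : u = w - 2) :
    (∑ a ∈ Finset.Icc 2 (w - 3), ∑ b ∈ Finset.Icc 1 (w - a - 2),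
      ∑ c ∈ Finset.Icc 1 (w - a - b - 1),
        (2 : ℝ) ^ c * mzv ![a, b, c, w - a - b - c])
    = (((w : ℝ) - 1) / 2) * mzv ![w] + ((q : ℝ) / 2) * mzv ![u, 2] - mzv ![3, q] := by
  obtain ⟨n, rfl⟩ := Nat.exists_eq_add_of_le' hw
  obtain rfl : q = n + 2 := hq
  obtain rfl : u = n + 3 := hu
  change MultipleZeta.weightedSum (n + 5) = _
  rw [MultipleZeta.weightedSum_eq]
  push_cast
  ring
end

section
/- Let w ≥ 5 be an integer and q = w−3, u = w−2. Then Σ_{a+b+c+d=w, a≥2, b,c,d≥1} (2^{a−1}−1)·2^b·(2^c+1)·ζ(a,b,c,d) = 2u·ζ(w) + q·ζ(u,2) − 2ζ(3,q). -/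
/-!
The weighted sum of weight `n + 4` is the coefficient of `x ^ n` in a fourfold series of products of
terms `1 / (k - x)` and `1 / (k - 2 x)`. In this language partial fractions are shuffle products,
and undoing them removes all terms `1 / (k - 2 x)`. The connector of Seki and Yamamoto, which is
`p! q! / (p + q)!` with all factors shifted by `x`, transports what remains to sums of depth at most
three, and linear relations between these leave only single and double sums whose coefficients are
the zeta values of the formula, together with a constant that affects weight 4 alone.

All series are taken in `[0, ∞]`, where rearrangements are free; in return, terms that carry a minus
sign in the formula have to stay on the other side until the end.
-/

namespace WeightedSum

open Finset Filter Topology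
open scoped ENNReal

/-! ### Rearranging double series -/

theorem tsum_tsum_eq_tsum_sum_range (f : ℕ → ℕ → ℝ≥0∞) :
    ∑' a, ∑' b, f a b = ∑' n, ∑ a ∈ range (n + 1), f a (n - a) := by
  rw [← ENNReal.tsum_prod, ← HasAntidiagonal.sigmaAntidiagonalEquivProd.tsum_eq,
    ENNReal.tsum_sigma']
  refine tsum_congr fun n => ?_
  rw [tsum_fintype, ← Finset.Nat.sum_antidiagonal_eq_sum_range_succ f]
  exact Finset.sum_coe_sort (antidiagonal n) fun p => f p.1 p.2

theorem tsum_sum_range_succ (f : ℕ → ℕ → ℝ≥0∞) :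
    ∑' n, ∑ m ∈ range (n + 1), f n m = ∑' m, ∑' d, f (m + d) m := by
  rw [tsum_tsum_eq_tsum_sum_range fun m d => f (m + d) m]
  refine tsum_congr fun n => sum_congr rfl fun m hm => ?_
  rw [Nat.add_sub_of_le (mem_range_succ_iff.1 hm)]

theorem tsum_sum_range (f : ℕ → ℕ → ℝ≥0∞) :
    ∑' n, ∑ m ∈ range n, f n m = ∑' m, ∑' d, f (m + d + 1) m := by
  rw [tsum_eq_zero_add' ENNReal.summable]
  simpa using tsum_sum_range_succ fun n m => f (n + 1) m

theorem tsum_tsum_gap (f : ℕ → ℕ → ℕ → ℝ≥0∞) :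
    ∑' m, ∑' d, f (m + d + 1) m d = ∑' n, ∑ m ∈ range n, f n m (n - 1 - m) := by
  rw [tsum_sum_range fun n m => f n m (n - 1 - m)]
  refine tsum_congr fun m => tsum_congr fun d => ?_
  rw [Nat.add_sub_cancel, Nat.add_sub_cancel_left]

theorem tsum_eq_of_telescoping {f g : ℕ → ℝ≥0∞} (hfg : ∀ n, f n = g n + f (n + 1))
    (hf : Tendsto f atTop (𝓝 0)) : ∑' n, g n = f 0 := by
  have hpartial (n : ℕ) : ∑ i ∈ range n, g i + f n = f 0 := by
    induction n with
    | zero => simp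
    | succ n ih => rw [sum_range_succ, add_assoc, ← hfg, ih]
  have hlim := (ENNReal.tendsto_nat_tsum g).add hf
  simp only [hpartial, add_zero] at hlim
  exact (tendsto_nhds_unique hlim tendsto_const_nhds)

/-! ### Shifted reciprocals -/

/-- The shifted reciprocal `1 / (n + 1 - x)`. For `x ≥ n + 1` it is `∞`, the subtraction being
truncated; the parameter `x` is the variable of the generating functions below. -/
noncomputable def shiftRecip (x : ℝ≥0∞) (n : ℕ) : ℝ≥0∞ := ((n : ℝ≥0∞) + 1 - x)⁻¹

local notation "U" => shiftRecip
local notation "V" => shiftRecip 0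

variable {x y : ℝ≥0∞}

theorem lt_natCast_add_one (hx : x < 1) (n : ℕ) : x < n + 1 := hx.trans_le le_add_self

theorem shiftRecip_ne_top {n : ℕ} (hx : x < n + 1) : U x n ≠ ∞ :=
  ENNReal.inv_ne_top.2 (tsub_pos_of_lt hx).ne'

theorem shiftRecip_zero_ne_top (n : ℕ) : V n ≠ ∞ :=
  shiftRecip_ne_top (lt_natCast_add_one one_pos n)

theorem shiftRecip_ne_zero (x : ℝ≥0∞) (n : ℕ) : U x n ≠ 0 := by
  simp [shiftRecip, ENNReal.sub_eq_top_iff]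

theorem natCast_add_one_mul_shiftRecip {n : ℕ} (hx : x < n + 1) :
    ((n : ℝ≥0∞) + 1) * U x n = 1 + x * U x n := by
  have hcancel : ((n : ℝ≥0∞) + 1 - x) * U x n = 1 :=
    ENNReal.mul_inv_cancel (tsub_pos_of_lt hx).ne' (by finiteness)
  calc ((n : ℝ≥0∞) + 1) * U x n = ((n + 1 - x) + x) * U x n := by
        rw [tsub_add_cancel_of_le hx.le]
    _ = 1 + x * U x n := by rw [add_mul, hcancel]

theorem natCast_add_one_mul_shiftRecip_zero (n : ℕ) : ((n : ℝ≥0∞) + 1) * V n = 1 := by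
  simpa using natCast_add_one_mul_shiftRecip (lt_natCast_add_one one_pos n)

theorem shiftRecip_mul_shiftRecip (hx : x < 1) (hy : y < 1) (a b : ℕ) :
    U x a * U y b = U (x + y) (a + b + 1) * (U x a + U y b) := by
  have hxy : x + y < ((a + b + 1 : ℕ) : ℝ≥0∞) + 1 := by
    refine (ENNReal.add_lt_add hx hy).trans_le ?_
    push_cast
    rw [add_assoc _ 1 1]
    exact le_add_self
  have hx_top := hx.ne_top
  have hy_top := hy.ne_top
  have hA := lt_natCast_add_one hx a
  have hB := lt_natCast_add_one hy b
  have hA' := shiftRecip_ne_top hA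
  have hB' := shiftRecip_ne_top hB
  have hC' := shiftRecip_ne_top hxy
  have hC := natCast_add_one_mul_shiftRecip hxy
  set A := U x a
  set B := U y b
  set C := U (x + y) (a + b + 1)
  refine (ENNReal.add_left_inj (a := (x + y) * (A * B * C)) (by finiteness)).1 ?_
  calc A * B + (x + y) * (A * B * C) = A * B * (1 + (x + y) * C) := by ring
    _ = ((a + 1) * A) * (B * C) + ((b + 1) * B) * (A * C) := by
      rw [← hC]; push_cast; ring
    _ = C * (A + B) + (x + y) * (A * B * C) := by
      rw [natCast_add_one_mul_shiftRecip hA, natCast_add_one_mul_shiftRecip hB]; ring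

theorem shiftRecip_zero_mul_shiftRecip (hx : x < 1) (m d : ℕ) :
    V d * U x m = U x (m + d + 1) * (V d + U x m) := by
  simpa only [zero_add, add_comm d m] using shiftRecip_mul_shiftRecip one_pos hx d m

theorem shiftRecip_add {n : ℕ} (h : x + y < n + 1) :
    U (x + y) n = U x n + y * U (x + y) n * U x n := by
  have hx : x < n + 1 := le_self_add.trans_lt h
  have hx_top := hx.ne_top
  have hA' := shiftRecip_ne_top h
  have hB' := shiftRecip_ne_top hx
  have hA := natCast_add_one_mul_shiftRecip h
  have hB := natCast_add_one_mul_shiftRecip hx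
  set A := U (x + y) n
  set B := U x n
  refine (ENNReal.add_left_inj (a := x * A * B) (by finiteness)).1 ?_
  calc A + x * A * B = A * (1 + x * B) := by ring
    _ = ((n + 1) * A) * B := by rw [← hB]; ring
    _ = B + y * A * B + x * A * B := by rw [hA]; ring

theorem shiftRecip_eq_add_mul (hx : x < 1) (n : ℕ) : U x n = V n + x * U x n * V n := by
  simpa using shiftRecip_add (x := 0) (y := x) (by simpa using lt_natCast_add_one hx n)

theorem tendsto_shiftRecip (hx : x ≠ ∞) : Tendsto (U x) atTop (𝓝 0) := by
  have hadd : Tendsto (fun n : ℕ => (n : ℝ≥0∞) + 1) atTop (𝓝 ∞) := by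
    simpa using ENNReal.tendsto_nat_nhds_top.add_const 1
  have hsub := ENNReal.Tendsto.sub hadd (tendsto_const_nhds (x := x)) (Or.inr hx)
  rw [ENNReal.top_sub hx] at hsub
  rw [← ENNReal.inv_top]
  exact tendsto_inv_iff.2 hsub

theorem tsum_shiftRecip_mul_shiftRecip (hx : x < 1) (a d : ℕ) :
    ∑' p, U x (a + p) * U x (a + p + d + 1) = V d * ∑ i ∈ range (d + 1), U x (a + i) := by
  have htelescope (p : ℕ) : V d * ∑ i ∈ range (d + 1), U x (a + i + p) =
      U x (a + p) * U x (a + p + d + 1) + V d * ∑ i ∈ range (d + 1), U x (a + i + (p + 1)) := by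
    have hsplit : U x (a + p) * U x (a + p + d + 1) + V d * U x (a + p + d + 1) =
        V d * U x (a + p) := by
      rw [shiftRecip_zero_mul_shiftRecip hx (a + p) d]
      ring
    rw [sum_range_succ', sum_range_succ, mul_add, mul_add, add_zero, ← hsplit,
      show a + d + (p + 1) = a + p + d + 1 by ring]
    simp only [show ∀ i, a + (i + 1) + p = a + i + (p + 1) by intro i; ring]
    ring
  have hlim : Tendsto (fun p => V d * ∑ i ∈ range (d + 1), U x (a + i + p)) atTop (𝓝 0) := by
    have hterm (i : ℕ) : Tendsto (fun p => U x (a + i + p)) atTop (𝓝 0) := by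
      simpa only [add_comm] using
        (tendsto_add_atTop_iff_nat (a + i)).2 (tendsto_shiftRecip hx.ne_top)
    simpa using ENNReal.Tendsto.const_mul (tendsto_finsetSum _ fun i _ => hterm i)
      (Or.inr (shiftRecip_zero_ne_top d))
  simpa using tsum_eq_of_telescoping htelescope hlim

/-! ### The generating function of the weighted sums -/

/-- The sum of a four-indexed family, the indices being the gaps `n₄ - 1`, `n₃ - n₄ - 1`,
`n₂ - n₃ - 1`, `n₁ - n₂ - 1` in a chain `n₁ > n₂ > n₃ > n₄ ≥ 1`. -/
noncomputable def fourfoldSum (f : ℕ → ℕ → ℕ → ℕ → ℝ≥0∞) : ℝ≥0∞ :=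
  ∑' a, ∑' b, ∑' c, ∑' d, f a b c d

theorem fourfoldSum_swap₁₂ (f : ℕ → ℕ → ℕ → ℕ → ℝ≥0∞) :
    fourfoldSum (fun a b c d => f b a c d) = fourfoldSum f :=
  ENNReal.tsum_comm

theorem fourfoldSum_swap₂₃ (f : ℕ → ℕ → ℕ → ℕ → ℝ≥0∞) :
    fourfoldSum (fun a b c d => f a c b d) = fourfoldSum f :=
  tsum_congr fun _ => ENNReal.tsum_comm

theorem fourfoldSum_swap₃₄ (f : ℕ → ℕ → ℕ → ℕ → ℝ≥0∞) :
    fourfoldSum (fun a b c d => f a b d c) = fourfoldSum f :=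
  tsum_congr fun _ => tsum_congr fun _ => ENNReal.tsum_comm

theorem fourfoldSum_add (f g : ℕ → ℕ → ℕ → ℕ → ℝ≥0∞) :
    fourfoldSum (fun a b c d => f a b c d + g a b c d) = fourfoldSum f + fourfoldSum g := by
  simp only [fourfoldSum, ENNReal.tsum_add]

/-- The generating function of the weighted sums of quadruple zeta values: the coefficient of
`x ^ (w - 4)` is the left-hand side of the sum formula in weight `w`. -/
noncomputable def weightedSumGenFun (x : ℝ≥0∞) : ℝ≥0∞ :=
  fourfoldSum fun a b c d =>
    x * U (x + x) (a + b + c + d + 3) * U x (a + b + c + d + 3) * (2 * U (x + x) (a + b + c + 2)) *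
      (2 * U (x + x) (a + b + 1) + U x (a + b + 1)) * U x a

/-- The result of undoing the shuffle products in `weightedSumGenFun`. -/
noncomputable def unshuffledGenFun (x : ℝ≥0∞) : ℝ≥0∞ :=
  fourfoldSum fun a b c d =>
    x * (U x (a + b + 1) * U x a * U x (c + d + 1) * U x c * U x (a + b + c + d + 3))

/-- The summand obtained from `unshuffledGenFun` by expanding only the shuffle product that involves
the outermost index. -/
noncomputable def halfShuffled (x : ℝ≥0∞) (a b c d : ℕ) : ℝ≥0∞ :=
  x * U (x + x) (a + b + c + d + 3) * U x (a + b + c + d + 3) * (U x a * U x b * U x (b + c + 1))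

theorem unshuffledGenFun_eq (hx : x < 1) :
    unshuffledGenFun x = 2 * fourfoldSum (halfShuffled x) := by
  have hshuffle : unshuffledGenFun x = fourfoldSum fun a b c d =>
      halfShuffled x a c d b + halfShuffled x c a b d := by
    unfold unshuffledGenFun halfShuffled
    congr 1 with a b c d
    have hmul := shiftRecip_mul_shiftRecip hx hx (a + b + 1) (c + d + 1)
    rw [show a + b + 1 + (c + d + 1) + 1 = a + b + c + d + 3 by ring] at hmul
    rw [show a + c + d + b + 3 = a + b + c + d + 3 by ring,
      show c + a + b + d + 3 = a + b + c + d + 3 by ring]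
    calc _ = x * U x a * U x c * U x (a + b + c + d + 3) * (U x (a + b + 1) * U x (c + d + 1)) := by
          ring
      _ = _ := by rw [hmul]; ring
  have hperm : fourfoldSum (fun a b c d => halfShuffled x a c d b) =
      fourfoldSum (halfShuffled x) := by
    rw [← fourfoldSum_swap₃₄ (halfShuffled x),
      ← fourfoldSum_swap₂₃ fun a b c d => halfShuffled x a b d c]
  have hperm' : fourfoldSum (fun a b c d => halfShuffled x c a b d) =
      fourfoldSum (halfShuffled x) := by
    rw [← fourfoldSum_swap₁₂ (halfShuffled x),
      ← fourfoldSum_swap₂₃ fun a b c d => halfShuffled x b a c d]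
  rw [hshuffle, fourfoldSum_add, hperm, hperm', two_mul]

theorem weightedSumGenFun_eq_halfShuffled (hx : x < 1) :
    weightedSumGenFun x = 2 * fourfoldSum (halfShuffled x) := by
  let f (a b c d : ℕ) : ℝ≥0∞ := x * U (x + x) (a + b + c + d + 3) * U x (a + b + c + d + 3) *
    U (x + x) (a + b + c + 2) * U x (a + b + 1) * U x a
  let g (a b c d : ℕ) : ℝ≥0∞ := x * U (x + x) (a + b + c + d + 3) * U x (a + b + c + d + 3) *
    U (x + x) (a + b + c + 2) * U (x + x) (a + b + 1) * U x a
  have hshuffle (a b c d : ℕ) : halfShuffled x a b c d = f b c a d + (g a b c d + g b a c d) := by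
    have houter := shiftRecip_mul_shiftRecip hx hx a (b + c + 1)
    have hinner := shiftRecip_mul_shiftRecip hx hx a b
    rw [show a + (b + c + 1) + 1 = a + b + c + 2 by ring] at houter
    simp only [f, g, halfShuffled]
    rw [show b + c + a = a + b + c by ring, add_comm b a]
    set K := x * U (x + x) (a + b + c + d + 3) * U x (a + b + c + d + 3)
    calc _ = K * U x b * (U x a * U x (b + c + 1)) := by ring
      _ = K * U (x + x) (a + b + c + 2) * (U x (b + c + 1) * U x b + U x a * U x b) := by
        rw [houter]; ring
      _ = _ := by rw [hinner]; ring
  have hperm : fourfoldSum (fun a b c d => f b c a d) = fourfoldSum f := by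
    rw [← fourfoldSum_swap₂₃ f, ← fourfoldSum_swap₁₂ fun a b c d => f a c b d]
  calc weightedSumGenFun x = 2 * (fourfoldSum f + (fourfoldSum g + fourfoldSum g)) := by
        rw [two_mul]
        simp only [weightedSumGenFun, ← fourfoldSum_add]
        congr 1 with a b c d
        simp only [f, g]
        ring
    _ = 2 * (fourfoldSum (fun a b c d => f b c a d) +
          (fourfoldSum g + fourfoldSum fun a b c d => g b a c d)) := by
        rw [hperm, fourfoldSum_swap₁₂ g]
    _ = 2 * fourfoldSum (halfShuffled x) := by
        simp only [← fourfoldSum_add]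
        congr 2 with a b c d
        exact (hshuffle a b c d).symm

/-- The shifted harmonic number `∑_{i < n} 1 / (i + 1 - x)`. -/
noncomputable def shiftHarmonic (x : ℝ≥0∞) (n : ℕ) : ℝ≥0∞ := ∑ i ∈ range n, U x i

local notation "H" => shiftHarmonic

/-- The nested harmonic sum `∑_{i ≤ k} V i * H x (i + 1)`, whose outer index is unshifted. -/
noncomputable def nestedHarmonic (x : ℝ≥0∞) (k : ℕ) : ℝ≥0∞ :=
  ∑ i ∈ range (k + 1), V i * H x (i + 1)

theorem tsum_tsum_mul_shiftRecip (hx : x < 1) (k : ℕ) :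
    ∑' c, ∑' d, U x (c + d + 1) * U x c * U x (k + (c + d + 1) + 1) =
      V k * nestedHarmonic x k := by
  have hinner (c : ℕ) : ∑' d, U x (c + d + 1) * U x c * U x (k + (c + d + 1) + 1) =
      V k * ∑ i ∈ range (k + 1), U x c * U x (c + i + 1) := by
    have hsum := tsum_shiftRecip_mul_shiftRecip hx (c + 1) k
    simp only [add_right_comm c 1] at hsum
    rw [← mul_sum, mul_left_comm, ← hsum, ← ENNReal.tsum_mul_left]
    refine tsum_congr fun d => ?_
    rw [show k + (c + d + 1) + 1 = c + d + 1 + k + 1 by ring]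
    ring
  simp_rw [hinner, ENNReal.tsum_mul_left]
  rw [Summable.tsum_finsetSum fun _ _ => ENNReal.summable]
  congr 1
  refine sum_congr rfl fun i _ => ?_
  simpa only [zero_add, shiftHarmonic] using tsum_shiftRecip_mul_shiftRecip hx 0 i

theorem unshuffledGenFun_eq_tsum (hx : x < 1) :
    unshuffledGenFun x = x * ∑' k, U x k * V k * (H x k * nestedHarmonic x k) := by
  have houter : unshuffledGenFun x =
      x * ∑' a, ∑' b, U x (a + b + 1) * U x a * (V (a + b + 1) * nestedHarmonic x (a + b + 1)) := by
    simp_rw [unshuffledGenFun, fourfoldSum, ENNReal.tsum_mul_left, ← tsum_tsum_mul_shiftRecip hx,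
      ← ENNReal.tsum_mul_left]
    simp only [show ∀ a b c d : ℕ, a + b + c + d + 3 = a + b + 1 + (c + d + 1) + 1 by
      intros; ring]
    simp only [mul_assoc]
  rw [houter, ← tsum_sum_range fun k a => U x k * U x a * (V k * nestedHarmonic x k)]
  congr 1
  refine tsum_congr fun k => ?_
  rw [← sum_mul, ← mul_sum, shiftHarmonic]
  ring

theorem weightedSumGenFun_eq_tsum (hx : x < 1) :
    weightedSumGenFun x = x * ∑' k, U x k * V k * (H x k * nestedHarmonic x k) := by
  rw [weightedSumGenFun_eq_halfShuffled hx, ← unshuffledGenFun_eq hx, unshuffledGenFun_eq_tsum hx]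

/-! ### The connector -/

/-- The connector of Seki and Yamamoto, usually written
`Γ(p + 1 - x) Γ(q + 1 - x) / (Γ(1 - x) Γ(p + q + 1 - x))`; here `n ↦ ∏_{i < n} U x i` plays the
role of `Γ(1 - x) / Γ(n + 1 - x)`. -/
noncomputable def connector (x : ℝ≥0∞) (p q : ℕ) : ℝ≥0∞ :=
  (∏ i ∈ range (p + q), U x i) * (∏ i ∈ range p, U x i)⁻¹ * (∏ i ∈ range q, U x i)⁻¹

theorem connector_comm (x : ℝ≥0∞) (p q : ℕ) : connector x p q = connector x q p := by
  rw [connector, connector, add_comm, mul_right_comm]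

theorem prod_shiftRecip_ne_zero (x : ℝ≥0∞) (n : ℕ) : ∏ i ∈ range n, U x i ≠ 0 :=
  prod_ne_zero_iff.2 fun i _ => shiftRecip_ne_zero x i

theorem prod_shiftRecip_ne_top (hx : x < 1) (n : ℕ) : ∏ i ∈ range n, U x i ≠ ∞ :=
  ENNReal.prod_ne_top fun i _ => shiftRecip_ne_top (lt_natCast_add_one hx i)

theorem connector_zero_left (hx : x < 1) (q : ℕ) : connector x 0 q = 1 := by
  simpa [connector] using
    ENNReal.mul_inv_cancel (prod_shiftRecip_ne_zero x q) (prod_shiftRecip_ne_top hx q)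

theorem shiftRecip_mul_connector_succ_left (hx : x < 1) (p q : ℕ) :
    U x p * connector x (p + 1) q = U x (p + q) * connector x p q := by
  have hp_zero := shiftRecip_ne_zero x p
  have hp_top := shiftRecip_ne_top (lt_natCast_add_one hx p)
  rw [connector, connector, add_right_comm, prod_range_succ, prod_range_succ _ p,
    ENNReal.mul_inv (Or.inr hp_top) (Or.inr hp_zero)]
  calc _ = U x p * (U x p)⁻¹ * (U x (p + q) * ((∏ i ∈ range (p + q), U x i) *
        (∏ i ∈ range p, U x i)⁻¹ * (∏ i ∈ range q, U x i)⁻¹)) := by ring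
    _ = _ := by rw [ENNReal.mul_inv_cancel hp_zero hp_top, one_mul]

theorem shiftRecip_mul_connector_succ_right (hx : x < 1) (p q : ℕ) :
    U x q * connector x p (q + 1) = U x (p + q) * connector x p q := by
  rw [connector_comm, shiftRecip_mul_connector_succ_left hx, add_comm, connector_comm]

theorem connector_telescope (hx : x < 1) (p q : ℕ) :
    V q * connector x p (q + 1) =
      U x p * connector x (p + 1) (q + 1) + V q * connector x (p + 1) (q + 1) := by
  have hp_zero := shiftRecip_ne_zero x p
  have hp_top := shiftRecip_ne_top (lt_natCast_add_one hx p)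
  have hshuffle := shiftRecip_mul_shiftRecip one_pos hx q p
  have hsucc := shiftRecip_mul_connector_succ_left hx p (q + 1)
  rw [zero_add, add_comm q p] at hshuffle
  rw [← add_assoc] at hsucc
  refine (ENNReal.mul_right_inj hp_zero hp_top).1 ?_
  calc U x p * (V q * connector x p (q + 1)) = V q * U x p * connector x p (q + 1) := by ring
    _ = (V q + U x p) * (U x (p + q + 1) * connector x p (q + 1)) := by rw [hshuffle]; ring
    _ = _ := by rw [← hsucc]; ring

theorem connector_le_one (hx : x < 1) (p q : ℕ) : connector x p q ≤ 1 := by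
  cases q with
  | zero => rw [connector_comm, connector_zero_left hx]
  | succ q =>
    induction p with
    | zero => rw [connector_zero_left hx]
    | succ p ih =>
      refine le_trans ?_ ih
      rw [← ENNReal.mul_le_mul_iff_right (shiftRecip_ne_zero 0 q) (shiftRecip_zero_ne_top q),
        connector_telescope hx p q]
      exact le_add_self

theorem tendsto_connector (hx : x < 1) (q : ℕ) :
    Tendsto (fun p => connector x p (q + 1)) atTop (𝓝 0) := by
  have hq_zero := shiftRecip_ne_zero x q
  have hq_top := shiftRecip_ne_top (lt_natCast_add_one hx q)
  have hbound (p : ℕ) : connector x p (q + 1) ≤ (U x q)⁻¹ * U x (p + q) := by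
    rw [← ENNReal.mul_le_mul_iff_right hq_zero hq_top, shiftRecip_mul_connector_succ_right hx,
      ENNReal.mul_inv_cancel_left hq_zero hq_top]
    exact mul_le_of_le_one_right' (connector_le_one hx p q)
  have hlim : Tendsto (fun p => (U x q)⁻¹ * U x (p + q)) atTop (𝓝 0) := by
    simpa using ENNReal.Tendsto.const_mul
      ((tendsto_add_atTop_iff_nat q).2 (tendsto_shiftRecip hx.ne_top))
      (Or.inr (ENNReal.inv_ne_top.2 hq_zero))
  exact tendsto_of_tendsto_of_tendsto_of_le_of_le tendsto_const_nhds hlim (fun _ => zero_le) hbound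

theorem tsum_shiftRecip_mul_connector (hx : x < 1) (p q : ℕ) :
    ∑' d, U x (p + d) * connector x (p + d + 1) (q + 1) = V q * connector x p (q + 1) := by
  refine tsum_eq_of_telescoping (f := fun d => V q * connector x (p + d) (q + 1))
    (fun d => connector_telescope hx (p + d) q) ?_
  have hlim := (tendsto_add_atTop_iff_nat p).2 (tendsto_connector hx q)
  simpa [add_comm] using ENNReal.Tendsto.const_mul hlim (Or.inr (shiftRecip_zero_ne_top q))

theorem shiftRecip_mul_tsum_connector (hx : x < 1) (p q : ℕ) :
    U x q * V p * ∑' d, U x (p + d) * connector x (p + d + 1) (q + 1) =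
      V q * U x p * ∑' d, U x (q + d) * connector x (p + 1) (q + d + 1) := by
  simp_rw [connector_comm x (p + 1)]
  rw [tsum_shiftRecip_mul_connector hx, tsum_shiftRecip_mul_connector hx]
  calc _ = V p * V q * (U x q * connector x p (q + 1)) := by ring
    _ = V p * V q * (U x p * connector x (p + 1) q) := by
      rw [shiftRecip_mul_connector_succ_right hx, shiftRecip_mul_connector_succ_left hx]
    _ = _ := by rw [connector_comm]; ring

/-- The kernel transform `f ↦ ∑ k, U x k * connector x (k + 1) (q + 1) * f k`, which carries sums
in the variable `k` over to sums in the variable `q`. -/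
noncomputable def transport (x : ℝ≥0∞) (f : ℕ → ℝ≥0∞) (q : ℕ) : ℝ≥0∞ :=
  ∑' k, U x k * connector x (k + 1) (q + 1) * f k

theorem transport_one (hx : x < 1) (q : ℕ) : transport x (fun _ => 1) q = V q := by
  simpa [transport, connector_zero_left hx] using tsum_shiftRecip_mul_connector hx 0 q

theorem transport_add (x : ℝ≥0∞) (f g : ℕ → ℝ≥0∞) (q : ℕ) :
    transport x (fun k => f k + g k) q = transport x f q + transport x g q := by
  simp only [transport, mul_add, ENNReal.tsum_add]

theorem transport_const_mul (x c : ℝ≥0∞) (f : ℕ → ℝ≥0∞) (q : ℕ) :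
    transport x (fun k => c * f k) q = c * transport x f q := by
  simp only [transport, mul_left_comm _ c, ENNReal.tsum_mul_left]

theorem transport_sum_range (hx : x < 1) (f : ℕ → ℝ≥0∞) (q : ℕ) :
    transport x (fun k => ∑ i ∈ range k, U x i * f i) q = V q * transport x f q := by
  simp only [transport, mul_sum]
  rw [tsum_sum_range fun k i => U x k * connector x (k + 1) (q + 1) * (U x i * f i),
    ← ENNReal.tsum_mul_left]
  refine tsum_congr fun i => ?_
  have htail := tsum_shiftRecip_mul_connector hx (i + 1) q
  simp only [add_right_comm i 1] at htail
  rw [ENNReal.tsum_mul_right, htail]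
  ring

theorem transport_sum_range_succ (hx : x < 1) (f : ℕ → ℝ≥0∞) (q : ℕ) :
    U x q * transport x (fun k => ∑ i ∈ range (k + 1), V i * f i) q =
      V q * ∑' d, U x (q + d) * transport x f (q + d) := by
  simp only [transport, mul_sum]
  rw [tsum_sum_range_succ fun k i => U x k * connector x (k + 1) (q + 1) * (V i * f i)]
  simp_rw [ENNReal.tsum_mul_right, ← ENNReal.tsum_mul_left]
  rw [ENNReal.tsum_comm (f := fun d i =>
    V q * (U x (q + d) * (U x i * connector x (i + 1) (q + d + 1) * f i)))]
  refine tsum_congr fun i => ?_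
  calc _ = U x q * V i * (∑' d, U x (i + d) * connector x (i + d + 1) (q + 1)) * f i := by ring
    _ = _ := by
      rw [shiftRecip_mul_tsum_connector hx, mul_right_comm, ← ENNReal.tsum_mul_left]
      exact tsum_congr fun d => by ring

theorem transport_mul_shiftRecip_zero (hx : x < 1) (f : ℕ → ℝ≥0∞) (q : ℕ) :
    transport x (fun k => V k * f k) q = ∑' d, U x (q + d + 1) * transport x f (q + d + 1) := by
  simp only [transport, ← ENNReal.tsum_mul_left]
  rw [ENNReal.tsum_comm (f := fun d k =>
    U x (q + d + 1) * (U x k * connector x (k + 1) (q + d + 1 + 1) * f k))]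
  refine tsum_congr fun k => ?_
  have htail := tsum_shiftRecip_mul_connector hx (q + 1) k
  simp only [add_right_comm q 1] at htail
  calc _ = U x k * f k * (V k * connector x (q + 1) (k + 1)) := by rw [connector_comm]; ring
    _ = _ := by
      rw [← htail, ← ENNReal.tsum_mul_left]
      exact tsum_congr fun d => by rw [connector_comm]; ring

theorem tsum_mul_transport_comm (x : ℝ≥0∞) (f g : ℕ → ℝ≥0∞) :
    ∑' q, U x q * g q * transport x f q = ∑' k, U x k * f k * transport x g k := by
  simp only [transport, ← ENNReal.tsum_mul_left]
  rw [ENNReal.tsum_comm]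
  refine tsum_congr fun k => tsum_congr fun q => ?_
  rw [connector_comm]
  ring

theorem tsum_mul_eq_tsum_transport (hx : x < 1) (f : ℕ → ℝ≥0∞) :
    ∑' k, U x k * V k * f k = ∑' q, U x q * transport x f q := by
  have hpair := tsum_mul_transport_comm x f fun _ => 1
  simp only [transport_one hx, mul_one] at hpair
  rw [hpair]
  exact tsum_congr fun k => by ring

/-! ### Reduction to sums of depth at most three -/

/-- The double sum `∑_{n > m} U x n ^ a * V n ^ b * U x m ^ c * V m ^ d`. -/
noncomputable def doubleSum (x : ℝ≥0∞) (a b c d : ℕ) : ℝ≥0∞ :=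
  ∑' n, ∑ m ∈ range n, U x n ^ a * V n ^ b * (U x m ^ c * V m ^ d)

/-- The single sum `∑_n U x n ^ a * V n ^ b`. -/
noncomputable def singleSum (x : ℝ≥0∞) (a b : ℕ) : ℝ≥0∞ := ∑' n, U x n ^ a * V n ^ b

/-- The triple sum `∑_{N ≥ k > n} U x N * V N * V k * U x n ^ 2`, with `N = n + d + 1` and
`k = n + i + 1`. -/
noncomputable def tripleSum (x : ℝ≥0∞) : ℝ≥0∞ :=
  ∑' n, U x n ^ 2 * ∑' d, U x (n + d + 1) * V (n + d + 1) * ∑ i ∈ range (d + 1), V (n + i + 1)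

/-- The tail `∑_{n > q} U x n * V n`. -/
noncomputable def tailSum (x : ℝ≥0∞) (q : ℕ) : ℝ≥0∞ :=
  ∑' e, U x (q + e + 1) * V (q + e + 1)

theorem tsum_mul_shiftRecip_zero (x : ℝ≥0∞) (q : ℕ) :
    ∑' e, U x (q + e) * V (q + e) = U x q * V q + tailSum x q :=
  tsum_eq_zero_add' ENNReal.summable

theorem doubleSum_eq_tsum_tail (x : ℝ≥0∞) (a b c d : ℕ) : doubleSum x a b c d =
    ∑' m, U x m ^ c * V m ^ d * ∑' e, U x (m + e + 1) ^ a * V (m + e + 1) ^ b := by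
  rw [doubleSum, tsum_sum_range fun n m => U x n ^ a * V n ^ b * (U x m ^ c * V m ^ d)]
  exact tsum_congr fun m => by rw [ENNReal.tsum_mul_right, mul_comm]

theorem doubleSum_one_one (x : ℝ≥0∞) (c d : ℕ) :
    doubleSum x 1 1 c d = ∑' m, U x m ^ c * V m ^ d * tailSum x m := by
  simp only [doubleSum_eq_tsum_tail, pow_one, tailSum]

theorem tsum_mul_sum_range_succ (x : ℝ≥0∞) (a b c d : ℕ) :
    ∑' n, U x n ^ a * V n ^ b * ∑ m ∈ range (n + 1), U x m ^ c * V m ^ d =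
      doubleSum x a b c d + singleSum x (a + c) (b + d) := by
  rw [doubleSum, singleSum, ← ENNReal.tsum_add]
  refine tsum_congr fun n => ?_
  rw [← mul_sum, sum_range_succ]
  ring

theorem shiftHarmonic_succ (x : ℝ≥0∞) (n : ℕ) : H x (n + 1) = H x n + U x n :=
  sum_range_succ _ n

theorem shiftHarmonic_sq (x : ℝ≥0∞) (k : ℕ) :
    H x k ^ 2 = ∑ n ∈ range k, U x n * (2 * H x n + U x n) := by
  induction k with
  | zero => simp [shiftHarmonic]
  | succ k ih => rw [sum_range_succ, ← ih, shiftHarmonic_succ]; ring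

theorem shiftHarmonic_mul_nestedHarmonic (x : ℝ≥0∞) (k : ℕ) : H x k * nestedHarmonic x k =
    ∑ n ∈ range k, U x n * nestedHarmonic x n +
      ∑ i ∈ range (k + 1), V i * (H x (i + 1) * H x i) := by
  induction k with
  | zero => simp [shiftHarmonic]
  | succ k ih =>
    have hnested : nestedHarmonic x (k + 1) =
        nestedHarmonic x k + V (k + 1) * H x (k + 1 + 1) := sum_range_succ _ _
    rw [sum_range_succ _ k, sum_range_succ _ (k + 1)]
    calc _ = H x k * nestedHarmonic x k + U x k * nestedHarmonic x k +
          V (k + 1) * (H x (k + 1 + 1) * H x (k + 1)) := by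
          rw [hnested, shiftHarmonic_succ x k]
          ring
      _ = _ := by rw [ih]; ring

theorem transport_shiftHarmonic (hx : x < 1) (q : ℕ) : transport x (H x) q = V q ^ 2 := by
  have hsum := transport_sum_range hx (fun _ => 1) q
  simp only [mul_one, transport_one hx, ← sq] at hsum
  exact hsum

theorem transport_shiftHarmonic_succ (hx : x < 1) (q : ℕ) :
    transport x (fun k => H x (k + 1)) q = V q ^ 2 + transport x (U x) q := by
  simp only [shiftHarmonic_succ, transport_add, transport_shiftHarmonic hx]

theorem transport_shiftHarmonic_succ_mul (hx : x < 1) (q : ℕ) :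
    transport x (fun k => H x (k + 1) * H x k) q =
      V q * (2 * V q ^ 2 + transport x (U x) q) + transport x (fun k => U x k * H x k) q := by
  simp_rw [shiftHarmonic_succ, add_mul, ← sq, shiftHarmonic_sq]
  rw [transport_add, transport_sum_range hx, transport_add, transport_const_mul,
    transport_shiftHarmonic hx]

theorem transport_shiftRecip_zero (hx : x < 1) (q : ℕ) : transport x V q = tailSum x q := by
  have htail := transport_mul_shiftRecip_zero hx (fun _ => 1) q
  simp only [mul_one, transport_one hx] at htail
  exact htail

theorem shiftRecip_mul_transport_harmonic (hx : x < 1) (q : ℕ) :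
    U x q * transport x (fun k => H 0 (k + 1)) q = V q * ∑' d, U x (q + d) * V (q + d) := by
  simpa only [mul_one, transport_one hx, shiftHarmonic] using
    transport_sum_range_succ hx (fun _ => 1) q

theorem shiftRecip_mul_transport_sum_sq (hx : x < 1) (q : ℕ) :
    U x q * transport x (fun k => ∑ i ∈ range (k + 1), V i ^ 2) q =
      V q * ∑' d, U x (q + d) * tailSum x (q + d) := by
  simpa only [sq, transport_shiftRecip_zero hx] using transport_sum_range_succ hx V q

theorem tsum_mul_tailSum (hx : x < 1) (f : ℕ → ℝ≥0∞) :
    ∑' r, U x r * f r * tailSum x r = ∑' q, U x q * V q * transport x f q := by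
  simp only [tailSum, ← ENNReal.tsum_mul_left]
  rw [← tsum_sum_range fun t r => U x r * f r * (U x t * V t)]
  simp_rw [← sum_mul]
  simp only [mul_comm _ (U x _ * V _)]
  rw [tsum_mul_eq_tsum_transport hx]
  simp only [transport_sum_range hx, mul_assoc]

theorem tsum_shiftHarmonic_mul_nestedHarmonic (hx : x < 1) :
    ∑' k, U x k * V k * (H x k * nestedHarmonic x k) = ∑' r, U x r *
      (transport x (fun k => H x (k + 1)) r * ∑ i ∈ range (r + 1), V i ^ 2 +
        transport x (fun k => H x (k + 1) * H x k) r * H 0 (r + 1)) := by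
  have hterm (q : ℕ) : U x q * transport x (fun k => H x k * nestedHarmonic x k) q =
      ∑' d, (V q ^ 2 * (U x (q + d) * transport x (fun k => H x (k + 1)) (q + d)) +
        V q * (U x (q + d) * transport x (fun k => H x (k + 1) * H x k) (q + d))) := by
    simp_rw [shiftHarmonic_mul_nestedHarmonic]
    rw [transport_add, transport_sum_range hx, mul_add, transport_sum_range_succ hx,
      ENNReal.tsum_add, ENNReal.tsum_mul_left, ENNReal.tsum_mul_left, mul_left_comm, sq, mul_assoc,
      ← transport_sum_range_succ hx fun i => H x (i + 1)]
    rfl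
  rw [tsum_mul_eq_tsum_transport hx]
  simp_rw [hterm]
  rw [← tsum_sum_range_succ fun r q => V q ^ 2 * (U x r * transport x (fun k => H x (k + 1)) r) +
    V q * (U x r * transport x (fun k => H x (k + 1) * H x k) r)]
  refine tsum_congr fun r => ?_
  rw [sum_add_distrib, ← sum_mul, ← sum_mul, shiftHarmonic]
  ring

theorem tsum_mul_sum_sq_mul_transport (hx : x < 1) :
    ∑' r, U x r * (∑ i ∈ range (r + 1), V i ^ 2) * transport x (U x) r =
      doubleSum x 1 1 1 2 + doubleSum x 1 1 2 1 := by
  have hrange (r : ℕ) : ∑ k ∈ range (r + 1), U x k * (V k * (U x r * tailSum x r)) =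
      U x r * (∑ k ∈ range r, U x k * V k) * tailSum x r + U x r ^ 2 * V r ^ 1 * tailSum x r := by
    rw [sum_range_succ, mul_sum, sum_mul]
    congr 1
    · exact sum_congr rfl fun k _ => by ring
    · ring
  rw [tsum_mul_transport_comm]
  simp_rw [mul_assoc, shiftRecip_mul_transport_sum_sq hx, ← ENNReal.tsum_mul_left]
  rw [← tsum_sum_range_succ fun r k => U x k * (V k * (U x r * tailSum x r))]
  simp_rw [hrange]
  rw [ENNReal.tsum_add, tsum_mul_tailSum hx, doubleSum_one_one, doubleSum_one_one]
  congr 1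
  refine tsum_congr fun q => ?_
  rw [transport_sum_range hx, transport_shiftRecip_zero hx]
  ring

theorem tsum_mul_harmonic_mul_transport (hx : x < 1) :
    ∑' r, U x r * (V r * H 0 (r + 1)) * transport x (U x) r = tripleSum x := by
  rw [tsum_mul_transport_comm]
  simp_rw [transport_mul_shiftRecip_zero hx, shiftRecip_mul_transport_harmonic hx]
  refine tsum_congr fun n => ?_
  have htriangle := tsum_sum_range_succ fun D d =>
    V (n + d + 1) * (U x (n + D + 1) * V (n + D + 1))
  simp_rw [← sum_mul, mul_comm _ (U x _ * V _)] at htriangle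
  rw [sq, htriangle]
  congr 1
  refine tsum_congr fun d => ?_
  rw [← ENNReal.tsum_mul_left]
  refine tsum_congr fun e => ?_
  rw [show n + d + 1 + e = n + (d + e) + 1 by ring]
  ring

theorem tsum_mul_harmonic_mul_transport_mul (hx : x < 1) :
    ∑' r, U x r * H 0 (r + 1) * transport x (fun k => U x k * H x k) r =
      doubleSum x 1 2 1 1 + doubleSum x 2 2 1 0 := by
  have hterm (k : ℕ) : U x k * (U x k * H x k) * transport x (fun r => H 0 (r + 1)) k =
      U x k * (V k * H x k) * tailSum x k + U x k ^ 2 * V k ^ 2 * H x k := by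
    calc _ = U x k * H x k * (U x k * transport x (fun r => H 0 (r + 1)) k) := by ring
      _ = _ := by
        rw [shiftRecip_mul_transport_harmonic hx, tsum_mul_shiftRecip_zero]
        ring
  rw [tsum_mul_transport_comm]
  simp_rw [hterm]
  rw [ENNReal.tsum_add, tsum_mul_tailSum hx]
  congr 1
  · simp only [transport_mul_shiftRecip_zero hx, transport_shiftHarmonic hx,
      doubleSum_eq_tsum_tail, pow_one]
  · simp only [doubleSum, shiftHarmonic, pow_zero, pow_one, mul_one, mul_sum]

theorem weightedSumGenFun_eq (hx : x < 1) : weightedSumGenFun x = x *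
    (doubleSum x 1 2 0 2 + 3 * singleSum x 1 4 + 2 * doubleSum x 1 3 0 1 + doubleSum x 1 1 1 2 +
      doubleSum x 1 1 2 1 + doubleSum x 1 2 1 1 + doubleSum x 2 2 1 0 + tripleSum x) := by
  have hsq := tsum_mul_sum_range_succ x 1 2 0 2
  have hone := tsum_mul_sum_range_succ x 1 3 0 1
  have hterm (r : ℕ) : U x r * (transport x (fun k => H x (k + 1)) r * ∑ i ∈ range (r + 1), V i ^ 2
      + transport x (fun k => H x (k + 1) * H x k) r * H 0 (r + 1)) =
      U x r * V r ^ 2 * (∑ i ∈ range (r + 1), V i ^ 2) +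
        2 * (U x r * V r ^ 3 * ∑ i ∈ range (r + 1), V i) +
        U x r * (∑ i ∈ range (r + 1), V i ^ 2) * transport x (U x) r +
        U x r * (V r * H 0 (r + 1)) * transport x (U x) r +
        U x r * H 0 (r + 1) * transport x (fun k => U x k * H x k) r := by
    rw [transport_shiftHarmonic_succ hx, transport_shiftHarmonic_succ_mul hx]
    simp only [shiftHarmonic]
    ring
  simp only [pow_zero, pow_one, one_mul] at hsq hone
  rw [weightedSumGenFun_eq_tsum hx, tsum_shiftHarmonic_mul_nestedHarmonic hx]
  simp_rw [hterm, ENNReal.tsum_add, ENNReal.tsum_mul_left]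
  rw [hsq, hone, tsum_mul_sum_sq_mul_transport hx, tsum_mul_harmonic_mul_transport hx,
    tsum_mul_harmonic_mul_transport_mul hx]
  ring

/-! ### Finiteness -/

theorem shiftRecip_zero_zero : shiftRecip 0 0 = 1 := by
  simp [shiftRecip]

theorem shiftRecip_le_zero (x : ℝ≥0∞) (n : ℕ) : U x n ≤ U x 0 := by
  rw [shiftRecip, shiftRecip, ENNReal.inv_le_inv]
  gcongr
  simp

theorem shiftRecip_zero_le_one (n : ℕ) : V n ≤ 1 :=
  (shiftRecip_le_zero 0 n).trans_eq shiftRecip_zero_zero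

theorem shiftRecip_le_mul (hx : x < 1) (n : ℕ) : U x n ≤ U x 0 * V n := by
  have hzero : U x 0 = 1 + x * U x 0 := by
    simpa using natCast_add_one_mul_shiftRecip (lt_natCast_add_one hx 0)
  calc U x n = V n * (((n : ℝ≥0∞) + 1) * U x n) := by
        rw [mul_left_comm, ← mul_assoc, natCast_add_one_mul_shiftRecip_zero, one_mul]
    _ = V n * (1 + x * U x n) := by rw [natCast_add_one_mul_shiftRecip (lt_natCast_add_one hx n)]
    _ ≤ V n * (1 + x * U x 0) := by gcongr; exact shiftRecip_le_zero x n
    _ = U x 0 * V n := by rw [← hzero, mul_comm]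

theorem shiftRecip_zero_le_two_mul (n : ℕ) : V n ≤ 2 * V (n + 1) := by
  have hshuffle := shiftRecip_mul_shiftRecip one_pos one_pos 0 n
  rw [shiftRecip_zero_zero, one_mul, add_zero, zero_add] at hshuffle
  calc V n = (1 + V n) * V (n + 1) := by rw [mul_comm, ← hshuffle]
    _ ≤ (1 + 1) * V (n + 1) := by gcongr; exact shiftRecip_zero_le_one n
    _ = 2 * V (n + 1) := by rw [one_add_one_eq_two]

theorem tsum_shiftRecip_zero_sq_ne_top : ∑' n, V n ^ 2 ≠ ∞ := by
  have hsum := tsum_shiftRecip_mul_shiftRecip one_pos 0 0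
  simp only [zero_add, add_zero, sum_range_one, shiftRecip_zero_zero, one_mul] at hsum
  refine ne_top_of_le_ne_top (b := 2 * 1) (by finiteness) ?_
  rw [← hsum, ← ENNReal.tsum_mul_left]
  refine ENNReal.tsum_le_tsum fun n => ?_
  calc V n ^ 2 = V n * V n := sq _
    _ ≤ V n * (2 * V (n + 1)) := by gcongr; exact shiftRecip_zero_le_two_mul n
    _ = 2 * (V n * V (n + 1)) := mul_left_comm _ _ _

theorem tsum_shiftRecip_zero_sq_mul_harmonic_ne_top : ∑' n, V n ^ 2 * H 0 n ≠ ∞ := by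
  -- Transport is Euler's identity `ζ(2,1) = ζ(3)` here.
  have heuler : ∑' n, V n ^ 2 * H 0 n = ∑' n, V n ^ 3 := by
    have htransport := tsum_mul_eq_tsum_transport one_pos (H 0)
    simp only [transport_shiftHarmonic one_pos, ← sq, ← pow_succ'] at htransport
    exact htransport
  rw [heuler]
  exact ne_top_of_le_ne_top tsum_shiftRecip_zero_sq_ne_top <| ENNReal.tsum_le_tsum fun n =>
    pow_le_pow_right_of_le_one' (shiftRecip_zero_le_one n) (by norm_num)

theorem shiftRecip_pow_mul_le (hx : x < 1) {a b k : ℕ} (hk : k ≤ a + b) (n : ℕ) :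
    U x n ^ a * V n ^ b ≤ U x 0 ^ a * V n ^ k := by
  calc U x n ^ a * V n ^ b ≤ (U x 0 * V n) ^ a * V n ^ b := by
        gcongr; exact shiftRecip_le_mul hx n
    _ = U x 0 ^ a * V n ^ (a + b) := by ring
    _ ≤ U x 0 ^ a * V n ^ k := by
        gcongr 1; exact pow_le_pow_right_of_le_one' (shiftRecip_zero_le_one n) hk

theorem singleSum_ne_top (hx : x < 1) {a b : ℕ} (hab : 2 ≤ a + b) : singleSum x a b ≠ ∞ := by
  have hU := shiftRecip_ne_top (lt_natCast_add_one hx 0)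
  have hsum := tsum_shiftRecip_zero_sq_ne_top
  refine ne_top_of_le_ne_top (b := U x 0 ^ a * ∑' n, V n ^ 2) (by finiteness) ?_
  rw [← ENNReal.tsum_mul_left]
  exact ENNReal.tsum_le_tsum fun n => shiftRecip_pow_mul_le hx hab n

theorem doubleSum_ne_top (hx : x < 1) {a b c d : ℕ} (hab : 2 ≤ a + b) (hcd : 1 ≤ c + d) :
    doubleSum x a b c d ≠ ∞ := by
  have hU := shiftRecip_ne_top (lt_natCast_add_one hx 0)
  have hsum := tsum_shiftRecip_zero_sq_mul_harmonic_ne_top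
  refine ne_top_of_le_ne_top (b := U x 0 ^ a * U x 0 ^ c * ∑' n, V n ^ 2 * H 0 n)
    (by finiteness) ?_
  rw [← ENNReal.tsum_mul_left]
  refine ENNReal.tsum_le_tsum fun n => ?_
  rw [shiftHarmonic, mul_sum, mul_sum]
  refine sum_le_sum fun m _ => ?_
  calc _ ≤ (U x 0 ^ a * V n ^ 2) * (U x 0 ^ c * V m ^ 1) :=
        mul_le_mul' (shiftRecip_pow_mul_le hx hab n) (shiftRecip_pow_mul_le hx hcd m)
    _ = _ := by ring

/-! ### Linear relations between the double and triple sums -/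

theorem singleSum_succ_left (hx : x < 1) (a b : ℕ) :
    singleSum x (a + 1) b = singleSum x a (b + 1) + x * singleSum x (a + 1) (b + 1) := by
  simp only [singleSum, ← ENNReal.tsum_mul_left, ← ENNReal.tsum_add]
  refine tsum_congr fun n => ?_
  calc _ = U x n ^ a * V n ^ b * U x n := by ring
    _ = U x n ^ a * V n ^ b * (V n + x * U x n * V n) := by rw [← shiftRecip_eq_add_mul hx]
    _ = _ := by ring

theorem doubleSum_succ_outer (hx : x < 1) (a b c d : ℕ) : doubleSum x (a + 1) b c d =
    doubleSum x a (b + 1) c d + x * doubleSum x (a + 1) (b + 1) c d := by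
  simp only [doubleSum, ← ENNReal.tsum_mul_left, ← ENNReal.tsum_add, mul_sum, ← sum_add_distrib]
  refine tsum_congr fun n => sum_congr rfl fun m _ => ?_
  calc _ = U x n ^ a * V n ^ b * (U x m ^ c * V m ^ d) * U x n := by ring
    _ = U x n ^ a * V n ^ b * (U x m ^ c * V m ^ d) * (V n + x * U x n * V n) := by
      rw [← shiftRecip_eq_add_mul hx]
    _ = _ := by ring

theorem doubleSum_succ_inner (hx : x < 1) (a b c d : ℕ) : doubleSum x a b (c + 1) d =
    doubleSum x a b c (d + 1) + x * doubleSum x a b (c + 1) (d + 1) := by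
  simp only [doubleSum, ← ENNReal.tsum_mul_left, ← ENNReal.tsum_add, mul_sum, ← sum_add_distrib]
  refine tsum_congr fun n => sum_congr rfl fun m _ => ?_
  calc _ = U x n ^ a * V n ^ b * (U x m ^ c * V m ^ d) * U x m := by ring
    _ = U x n ^ a * V n ^ b * (U x m ^ c * V m ^ d) * (V m + x * U x m * V m) := by
      rw [← shiftRecip_eq_add_mul hx]
    _ = _ := by ring

theorem shiftRecip_zero_sub_mul_shiftRecip (hx : x < 1) {m n : ℕ} (hmn : m < n) :
    V (n - 1 - m) * U x m = U x n * (V (n - 1 - m) + U x m) := by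
  simpa only [show m + (n - 1 - m) + 1 = n by lia] using
    shiftRecip_zero_mul_shiftRecip hx m (n - 1 - m)

theorem sum_shiftRecip_zero_reflect (n : ℕ) : ∑ m ∈ range n, V (n - 1 - m) = H 0 n :=
  sum_range_reflect V n

theorem tsum_tsum_shiftRecip_zero_mul (g : ℕ → ℝ≥0∞) :
    ∑' m, ∑' d, V d * g (m + d + 1) = ∑' n, g n * H 0 n := by
  rw [tsum_tsum_gap fun n _ d => V d * g n]
  simp_rw [← sum_mul, sum_shiftRecip_zero_reflect, mul_comm]

theorem tsum_shiftRecip_zero_mul_shiftRecip_zero (m : ℕ) :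
    ∑' d, V d * V (m + d + 1) = V m * H 0 (m + 1) := by
  simpa only [zero_add, add_comm m, shiftHarmonic] using
    tsum_shiftRecip_mul_shiftRecip one_pos 0 m

theorem doubleSum_add_doubleSum_eq_singleSum (hx : x < 1) :
    doubleSum x 2 1 1 0 + doubleSum x 1 1 2 0 = singleSum x 2 2 := by
  have hinner : ∑' n, U x n ^ 2 * V n * H 0 n = doubleSum x 2 1 0 1 := by
    simp only [doubleSum, shiftHarmonic, mul_sum, pow_zero, pow_one, one_mul]
  have houter : ∑' m, U x m ^ 2 * (V m * H 0 (m + 1)) = doubleSum x 2 1 0 1 + singleSum x 2 2 := by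
    rw [← tsum_mul_sum_range_succ x 2 1 0 1]
    simp only [shiftHarmonic, pow_zero, pow_one, one_mul, mul_assoc]
  refine (ENNReal.add_right_inj (doubleSum_ne_top hx (a := 2) (b := 1) (c := 0) (d := 1)
    (by norm_num) (by norm_num))).1 ?_
  rw [← houter, ← hinner, ← tsum_tsum_shiftRecip_zero_mul fun n => U x n ^ 2 * V n]
  simp only [← tsum_shiftRecip_zero_mul_shiftRecip_zero, ← ENNReal.tsum_mul_left, doubleSum]
  rw [tsum_sum_range, tsum_sum_range, ← ENNReal.tsum_add, ← ENNReal.tsum_add]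
  refine tsum_congr fun m => ?_
  rw [← ENNReal.tsum_add, ← ENNReal.tsum_add]
  refine tsum_congr fun d => ?_
  have hsplit := shiftRecip_zero_mul_shiftRecip hx m d
  set n := m + d + 1
  calc _ = V n * U x n * (U x n * (V d + U x m)) + V n * (U x n * U x m ^ 2) := by ring
    _ = V n * U x n * (V d * U x m) + V n * (U x n * U x m ^ 2) := by rw [← hsplit]
    _ = V n * U x m * (U x n * (V d + U x m)) := by ring
    _ = U x m ^ 2 * (V d * V n) := by rw [← hsplit]; ring

theorem sum_sq_mul_reflect (n : ℕ) : ∑ m ∈ range n, V m ^ 2 * V (n - 1 - m) =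
    V n * (∑ m ∈ range n, V m ^ 2 + 2 * (V n * H 0 n)) := by
  have hterm : ∀ m ∈ range n, V m ^ 2 * V (n - 1 - m) =
      V n * V m ^ 2 + V n * V n * V m + V n * V n * V (n - 1 - m) := by
    intro m hm
    have hsplit := shiftRecip_zero_sub_mul_shiftRecip one_pos (mem_range.1 hm)
    calc _ = V m * (V (n - 1 - m) * V m) := by ring
      _ = V m * (V n * (V (n - 1 - m) + V m)) := by rw [hsplit]
      _ = V n * V m ^ 2 + V n * (V (n - 1 - m) * V m) := by ring
      _ = V n * V m ^ 2 + V n * (V n * (V (n - 1 - m) + V m)) := by rw [hsplit]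
      _ = _ := by ring
  rw [sum_congr rfl hterm, sum_add_distrib, sum_add_distrib, ← mul_sum, ← mul_sum, ← mul_sum,
    sum_shiftRecip_zero_reflect, shiftHarmonic]
  ring

theorem mul_doubleSum_add_doubleSum_add_doubleSum (hx : x < 1) :
    x * doubleSum x 1 1 1 2 + doubleSum x 1 1 0 2 + doubleSum x 1 2 0 1 = singleSum x 1 3 := by
  have hinner : ∑' m, ∑' d, U x (m + d + 1) * (V m ^ 2 * V d) =
      doubleSum x 1 1 0 2 + 2 * doubleSum x 1 2 0 1 := by
    rw [tsum_tsum_gap fun n m d => U x n * (V m ^ 2 * V d)]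
    simp only [← mul_sum, sum_sq_mul_reflect, doubleSum, ← ENNReal.tsum_mul_left,
      ← ENNReal.tsum_add, shiftHarmonic]
    refine tsum_congr fun n => ?_
    simp only [pow_zero, pow_one, one_mul]
    ring
  have houter : ∑' m, U x m * V m * (V m * H 0 (m + 1)) =
      doubleSum x 1 2 0 1 + singleSum x 1 3 := by
    rw [← tsum_mul_sum_range_succ x 1 2 0 1]
    simp only [shiftHarmonic, pow_zero, pow_one, one_mul, sq, mul_assoc]
  refine (ENNReal.add_right_inj (doubleSum_ne_top hx (a := 1) (b := 2) (c := 0) (d := 1)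
    (by norm_num) (by norm_num))).1 ?_
  calc _ = x * doubleSum x 1 1 1 2 + ∑' m, ∑' d, U x (m + d + 1) * (V m ^ 2 * V d) := by
        rw [hinner]; ring
    _ = ∑' m, ∑' d, U x m * V m * (V d * V (m + d + 1)) := by
      rw [doubleSum, tsum_sum_range, ← ENNReal.tsum_mul_left, ← ENNReal.tsum_add]
      refine tsum_congr fun m => ?_
      rw [← ENNReal.tsum_mul_left, ← ENNReal.tsum_add]
      refine tsum_congr fun d => ?_
      have hsplit := shiftRecip_zero_mul_shiftRecip hx m d
      have hsplit_zero := shiftRecip_zero_mul_shiftRecip one_pos m d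
      have hmul := shiftRecip_eq_add_mul hx m
      set n := m + d + 1
      calc _ = x * (U x n * V n * (U x m * V m ^ 2)) + U x n * V m * (V d * V m) := by ring
        _ = U x n * V n * V m * (V d + (V m + x * U x m * V m)) := by rw [hsplit_zero]; ring
        _ = V n * V m * (U x n * (V d + U x m)) := by rw [← hmul]; ring
        _ = U x m * V m * (V d * V n) := by rw [← hsplit]; ring
    _ = doubleSum x 1 2 0 1 + singleSum x 1 3 := by
      simp only [ENNReal.tsum_mul_left, tsum_shiftRecip_zero_mul_shiftRecip_zero, houter]

/-- The nested sum `∑_{k > n > m} U x n * U x m` over all `m < n` below `k`. -/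
noncomputable def doubleHarmonic (x : ℝ≥0∞) (k : ℕ) : ℝ≥0∞ := ∑ n ∈ range k, U x n * H x n

theorem transport_doubleHarmonic (hx : x < 1) (q : ℕ) :
    transport x (doubleHarmonic x) q = V q ^ 3 := by
  have hsum := transport_sum_range hx (H x) q
  rw [transport_shiftHarmonic hx, ← pow_succ'] at hsum
  exact hsum

theorem tsum_sq_mul_doubleHarmonic_add (hx : x < 1) :
    ∑' k, V k ^ 2 * doubleHarmonic x k + x * doubleSum x 1 3 1 0 = singleSum x 1 3 := by
  have hsingle : singleSum x 1 3 = ∑' k, U x k * V k * doubleHarmonic x k := by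
    rw [tsum_mul_eq_tsum_transport hx]
    simp only [singleSum, pow_one, transport_doubleHarmonic hx]
  have hdouble : doubleSum x 1 3 1 0 = ∑' k, U x k * V k * (V k * doubleHarmonic x k) := by
    rw [tsum_mul_eq_tsum_transport hx]
    simp_rw [transport_mul_shiftRecip_zero hx, transport_doubleHarmonic hx,
      doubleSum_eq_tsum_tail, pow_one, pow_zero, mul_one]
  rw [hsingle, hdouble, ← ENNReal.tsum_mul_left, ← ENNReal.tsum_add]
  refine tsum_congr fun k => ?_
  calc _ = (V k + x * U x k * V k) * (V k * doubleHarmonic x k) := by ring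
    _ = _ := by rw [← shiftRecip_eq_add_mul hx]; ring

theorem sum_reflect_mul_shiftRecip (hx : x < 1) (k : ℕ) :
    ∑ n ∈ range k, V (k - 1 - n) * U x n = U x k * (H 0 k + H x k) := by
  rw [sum_congr rfl fun n hn => shiftRecip_zero_sub_mul_shiftRecip hx (mem_range.1 hn),
    ← mul_sum, sum_add_distrib, sum_shiftRecip_zero_reflect, ← shiftHarmonic]

theorem sum_reflect_mul_shiftHarmonic (hx : x < 1) (k : ℕ) :
    ∑ n ∈ range k, V (k - 1 - n) * H x n = ∑ n ∈ range k, U x n * (H x n + H 0 n) := by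
  induction k with
  | zero => simp
  | succ k ih =>
    rw [sum_range_succ (fun n => U x n * (H x n + H 0 n)), ← ih, sum_range_succ', shiftHarmonic,
      sum_range_zero, mul_zero, add_zero, add_comm (H x k), ← sum_reflect_mul_shiftRecip hx,
      ← sum_add_distrib]
    refine sum_congr rfl fun n _ => ?_
    rw [show k + 1 - 1 - (n + 1) = k - 1 - n by lia, shiftHarmonic_succ]
    ring

theorem shiftHarmonic_zero_mul_shiftHarmonic (x : ℝ≥0∞) (k : ℕ) : H 0 k * H x k =
    ∑ n ∈ range k, (V n * H x n + U x n * H 0 n + U x n * V n) := by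
  induction k with
  | zero => simp [shiftHarmonic]
  | succ k ih =>
    rw [sum_range_succ, ← ih, shiftHarmonic_succ, shiftHarmonic_succ]
    ring

theorem shiftHarmonic_add (x : ℝ≥0∞) (a b : ℕ) :
    H x (a + b) = H x a + ∑ l ∈ range b, U x (a + l) :=
  sum_range_add _ _ _

theorem shiftHarmonic_ne_top (hx : x < 1) (n : ℕ) : H x n ≠ ∞ :=
  ENNReal.sum_ne_top.2 fun i _ => shiftRecip_ne_top (lt_natCast_add_one hx i)

theorem sum_reflect_mul_sum (n : ℕ) :
    ∑ j ∈ range n, V (n - 1 - j) * ∑ l ∈ range (n - j), V (j + l) = ∑ m ∈ range n, V m ^ 2 := by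
  have hsplit : H 0 n ^ 2 = ∑ j ∈ range n, V (n - 1 - j) * H 0 j +
      ∑ j ∈ range n, V (n - 1 - j) * ∑ l ∈ range (n - j), V (j + l) := by
    rw [sq, ← sum_shiftRecip_zero_reflect, sum_mul, sum_shiftRecip_zero_reflect, ← sum_add_distrib]
    refine sum_congr rfl fun j hj => ?_
    rw [← mul_add, ← shiftHarmonic_add, Nat.add_sub_cancel' (mem_range.1 hj).le]
  have hsq : H 0 n ^ 2 = ∑ j ∈ range n, V (n - 1 - j) * H 0 j + ∑ m ∈ range n, V m ^ 2 := by
    rw [shiftHarmonic_sq, sum_reflect_mul_shiftHarmonic one_pos, ← sum_add_distrib]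
    exact sum_congr rfl fun m _ => by ring
  refine (ENNReal.add_right_inj (ENNReal.sum_ne_top.2 fun j _ => ?_)).1 (hsplit.symm.trans hsq)
  exact ENNReal.mul_ne_top (shiftRecip_zero_ne_top _) (shiftHarmonic_ne_top one_pos j)

theorem natCast_add_one_mul_tsum (n : ℕ) : ((n : ℝ≥0∞) + 1) * ∑' d, V d * V (n + d + 1) *
    ∑ i ∈ range (d + 1), V (n + i + 1) = ∑ m ∈ range (n + 1), V m ^ 2 := by
  have hinner (i : ℕ) : ((n : ℝ≥0∞) + 1) * ∑' e, V (i + e) * V (n + (i + e) + 1) =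
      ∑ j ∈ range (n + 1), V (i + j) := by
    have hsum := tsum_shiftRecip_mul_shiftRecip one_pos i n
    simp only [show ∀ e, i + e + n + 1 = n + (i + e) + 1 by intro e; ring] at hsum
    rw [hsum, ← mul_assoc, natCast_add_one_mul_shiftRecip_zero, one_mul]
  have houter (j : ℕ) (hj : j ∈ range (n + 1)) : ∑' i, V (n + i + 1) * V (i + j) =
      V (n + 1 - 1 - j) * ∑ l ∈ range (n + 1 - j), V (j + l) := by
    have hsum := tsum_shiftRecip_mul_shiftRecip one_pos j (n - j)
    rw [show n + 1 - 1 - j = n - j by lia, Nat.succ_sub (mem_range_succ_iff.1 hj), ← hsum]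
    refine tsum_congr fun i => ?_
    rw [show j + i + (n - j) + 1 = n + i + 1 by grind, add_comm j i, mul_comm]
  calc _ = ∑' i, V (n + i + 1) * (((n : ℝ≥0∞) + 1) * ∑' e, V (i + e) * V (n + (i + e) + 1)) := by
        simp_rw [mul_sum]
        rw [tsum_sum_range_succ fun d i => V d * V (n + d + 1) * V (n + i + 1),
          ← ENNReal.tsum_mul_left]
        refine tsum_congr fun i => ?_
        rw [ENNReal.tsum_mul_right]
        ring
    _ = ∑ j ∈ range (n + 1), ∑' i, V (n + i + 1) * V (i + j) := by
      simp_rw [hinner, mul_sum]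
      exact Summable.tsum_finsetSum fun _ _ => ENNReal.summable
    _ = _ := by rw [sum_congr rfl houter, sum_reflect_mul_sum]

/-- The triple sum `∑_{N ≥ k > n} U x N * U x n * V k * V (N - n - 1)`, with `N = n + d + 1` and
`k = n + i + 1`. It mediates between `tripleSum` and the double sums. -/
noncomputable def mixedTripleSum (x : ℝ≥0∞) : ℝ≥0∞ :=
  ∑' n, ∑' d, U x n * U x (n + d + 1) * (V d * ∑ i ∈ range (d + 1), V (n + i + 1))

theorem mul_tripleSum_add_mixedTripleSum (hx : x < 1) :
    x * tripleSum x + mixedTripleSum x = doubleSum x 2 0 0 2 + singleSum x 2 2 := by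
  have hright := tsum_mul_sum_range_succ x 2 0 0 2
  simp only [pow_zero, one_mul, mul_one] at hright
  simp_rw [← hright, ← natCast_add_one_mul_tsum, tripleSum, mixedTripleSum,
    ← ENNReal.tsum_mul_left, ← ENNReal.tsum_add]
  refine tsum_congr fun n => tsum_congr fun d => ?_
  have hleft := natCast_add_one_mul_shiftRecip (lt_natCast_add_one hx n)
  have hsplit := shiftRecip_zero_mul_shiftRecip hx n d
  have hmul := shiftRecip_eq_add_mul hx (n + d + 1)
  set N := n + d + 1
  set S := ∑ i ∈ range (d + 1), V (n + i + 1)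
  calc _ = U x n * S * (x * V N * (U x N * U x n) + U x N * V d) := by ring
    _ = U x n * S * (x * V N * (U x N * U x n) + (V N + x * U x N * V N) * V d) := by rw [← hmul]
    _ = U x n * S * V N * (V d + x * (U x N * (V d + U x n))) := by ring
    _ = U x n * S * V N * (V d + x * (V d * U x n)) := by rw [hsplit]
    _ = U x n * S * V N * V d * (1 + x * U x n) := by ring
    _ = _ := by rw [← hleft]; ring

theorem sum_shiftRecip_mul_shiftRecip_add (hx : x < 1) (n g : ℕ) :
    ∑ m ∈ range n, U x m * U x (m + g + 1) + V g * H x (n + g + 1) =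
      V g * (H x n + H x (g + 1)) := by
  have hsum : ∑ m ∈ range n, U x m * U x (m + g + 1) + V g * ∑ m ∈ range n, U x (g + 1 + m) =
      V g * H x n := by
    rw [shiftHarmonic, mul_sum, mul_sum, ← sum_add_distrib]
    refine sum_congr rfl fun m _ => ?_
    rw [shiftRecip_zero_mul_shiftRecip hx m g, show g + 1 + m = m + g + 1 by ring]
    ring
  rw [show n + g + 1 = g + 1 + n by ring, shiftHarmonic_add, mul_add, mul_add, ← hsum]
  ring

theorem sum_mul_reflect_mul_shiftHarmonic (hx : x < 1) (k : ℕ) :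
    ∑ n ∈ range k, V n * V (k - 1 - n) * (H x n + H x (k - 1 - n + 1)) +
        V k * ∑ n ∈ range k, U x n * V n =
      V k * (2 * (H 0 k * H x k) + 2 * doubleHarmonic x k + U x k * (H 0 k + H x k)) := by
  have hreflect : ∑ n ∈ range k, V n * V (k - 1 - n) * H x (k - 1 - n + 1) =
      ∑ n ∈ range k, V n * V (k - 1 - n) * H x (n + 1) := by
    rw [← sum_range_reflect fun n => V n * V (k - 1 - n) * H x (n + 1)]
    refine sum_congr rfl fun n hn => ?_
    rw [Nat.sub_sub_self (Nat.le_sub_one_of_lt (mem_range.1 hn)), mul_comm (V n)]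
  have hexpand : ∑ n ∈ range k, V n * V (k - 1 - n) * (H x n + H x (n + 1)) =
      V k * (∑ n ∈ range k, (2 * (V n * H x n) + U x n * V n) +
        (2 * ∑ n ∈ range k, V (k - 1 - n) * H x n + ∑ n ∈ range k, V (k - 1 - n) * U x n)) := by
    rw [mul_sum _ _ 2, ← sum_add_distrib, ← sum_add_distrib, mul_sum]
    refine sum_congr rfl fun n hn => ?_
    rw [mul_comm (V n), shiftRecip_zero_sub_mul_shiftRecip one_pos (mem_range.1 hn),
      shiftHarmonic_succ]
    ring
  simp_rw [mul_add (_ * _), sum_add_distrib]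
  rw [hreflect, ← sum_add_distrib]
  simp_rw [← mul_add]
  rw [hexpand, sum_reflect_mul_shiftRecip hx, sum_reflect_mul_shiftHarmonic hx,
    shiftHarmonic_zero_mul_shiftHarmonic, ← mul_add, doubleHarmonic]
  simp only [mul_add, sum_add_distrib, ← mul_sum]
  ring

theorem sum_mul_sum_shiftRecip_mul_shiftRecip_add (hx : x < 1) (k : ℕ) :
    ∑ n ∈ range k, V n * ∑ m ∈ range n, U x m * U x (m + (k - 1 - n) + 1) +
        V k * ∑ n ∈ range k, U x n * V n =
      V k * (2 * doubleHarmonic x k + U x k * (H 0 k + H x k)) := by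
  have hshift : ∑ n ∈ range k, V n * ∑ m ∈ range n, U x m * U x (m + (k - 1 - n) + 1) +
      ∑ n ∈ range k, V n * V (k - 1 - n) * H x k =
      ∑ n ∈ range k, V n * V (k - 1 - n) * (H x n + H x (k - 1 - n + 1)) := by
    rw [← sum_add_distrib]
    refine sum_congr rfl fun n hn => ?_
    have hsum := sum_shiftRecip_mul_shiftRecip_add hx n (k - 1 - n)
    rw [show n + (k - 1 - n) + 1 = k by grind] at hsum
    rw [mul_assoc, mul_assoc, ← mul_add, hsum]
  have hharmonic : ∑ n ∈ range k, V n * V (k - 1 - n) * H x k = V k * (2 * (H 0 k * H x k)) := by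
    have hsum := sum_reflect_mul_shiftRecip one_pos k
    simp_rw [← sum_mul, mul_comm (V _) (V (k - 1 - _)), hsum]
    ring
  have hfinite : V k * (2 * (H 0 k * H x k)) ≠ ∞ := by
    have hV := shiftRecip_zero_ne_top k
    have hzero := shiftHarmonic_ne_top one_pos k
    have hx' := shiftHarmonic_ne_top hx k
    finiteness
  refine (ENNReal.add_left_inj hfinite).1 ?_
  rw [add_right_comm, ← hharmonic, hshift, sum_mul_reflect_mul_shiftHarmonic hx, hharmonic]
  ring

theorem mixedTripleSum_eq_tsum (x : ℝ≥0∞) : mixedTripleSum x = ∑' k, V k * ∑ n ∈ range k,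
    V n * ∑ m ∈ range n, U x m * U x (m + (k - 1 - n) + 1) := by
  have hconv (m d : ℕ) : V d * ∑ i ∈ range (d + 1), V (m + i + 1) =
      ∑' p, V (m + p + 1) * V (m + p + 1 + d + 1) := by
    simpa only [add_right_comm m 1] using
      (tsum_shiftRecip_mul_shiftRecip one_pos (m + 1) d).symm
  simp_rw [mul_sum (range _) _ (V _)]
  rw [← tsum_tsum_gap fun k n d =>
    ∑ m ∈ range n, V k * (V n * (U x m * U x (m + d + 1))), ENNReal.tsum_comm, mixedTripleSum,
    ENNReal.tsum_comm]
  refine tsum_congr fun d => ?_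
  rw [tsum_sum_range fun n m => V (n + d + 1) * (V n * (U x m * U x (m + d + 1)))]
  refine tsum_congr fun m => ?_
  rw [hconv, ← ENNReal.tsum_mul_left]
  exact tsum_congr fun p => by ring

theorem mixedTripleSum_add_doubleSum (hx : x < 1) : mixedTripleSum x + doubleSum x 0 2 1 1 =
    2 * ∑' k, V k ^ 2 * doubleHarmonic x k + doubleSum x 1 2 0 1 + doubleSum x 1 2 1 0 := by
  simp only [mixedTripleSum_eq_tsum, doubleSum, ← ENNReal.tsum_mul_left, ← ENNReal.tsum_add,
    pow_zero, pow_one, mul_one, one_mul, ← mul_sum]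
  refine tsum_congr fun k => ?_
  rw [sq, mul_assoc (V k) (V k), ← mul_add, sum_mul_sum_shiftRecip_mul_shiftRecip_add hx]
  simp only [shiftHarmonic]
  ring

theorem mul_tripleSum_add_eq (hx : x < 1) :
    x * tripleSum x + 2 * singleSum x 1 3 + doubleSum x 1 2 0 1 + doubleSum x 1 2 1 0 =
      doubleSum x 2 0 0 2 + singleSum x 2 2 + 2 * (x * doubleSum x 1 3 1 0) +
        doubleSum x 0 2 1 1 := by
  have htriple := mul_tripleSum_add_mixedTripleSum hx
  have hmixed := mixedTripleSum_add_doubleSum hx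
  have hharmonic := tsum_sq_mul_doubleHarmonic_add hx
  have hfinite : mixedTripleSum x ≠ ∞ := by
    refine ne_top_of_le_ne_top (ENNReal.add_ne_top.2 ⟨?_, ?_⟩) (le_add_self.trans_eq htriple)
    · exact doubleSum_ne_top hx (by norm_num) (by norm_num)
    · exact singleSum_ne_top hx (by norm_num)
  refine (ENNReal.add_right_inj hfinite).1 ?_
  calc _ = x * tripleSum x + mixedTripleSum x + 2 * singleSum x 1 3 + doubleSum x 1 2 0 1 +
        doubleSum x 1 2 1 0 := by ring
    _ = doubleSum x 2 0 0 2 + singleSum x 2 2 + 2 * (x * doubleSum x 1 3 1 0) +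
        (2 * ∑' k, V k ^ 2 * doubleHarmonic x k + doubleSum x 1 2 0 1 + doubleSum x 1 2 1 0) := by
      rw [htriple, ← hharmonic]; ring
    _ = _ := by rw [← hmixed]; ring

theorem weightedSumGenFun_add_eq_tripleSum (hx : x < 1) :
    weightedSumGenFun x + (3 * singleSum x 0 4 + doubleSum x 0 2 0 2 + 2 * doubleSum x 0 3 0 1) =
      4 * singleSum x 1 3 + doubleSum x 1 2 0 1 + x * (doubleSum x 1 1 2 1 + doubleSum x 1 2 1 1 +
        doubleSum x 2 2 1 0) + x * tripleSum x := by
  have h_single := singleSum_succ_left hx 0 3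
  have h_outer_two := doubleSum_succ_outer hx 0 1 0 2
  have h_outer_one := doubleSum_succ_outer hx 0 2 0 1
  simp only [zero_add, one_add_one_eq_two, Nat.reduceAdd] at h_single h_outer_two h_outer_one
  calc _ = 3 * (singleSum x 0 4 + x * singleSum x 1 4) +
        2 * (doubleSum x 0 3 0 1 + x * doubleSum x 1 3 0 1) + (x * doubleSum x 1 1 1 2 +
        (doubleSum x 0 2 0 2 + x * doubleSum x 1 2 0 2)) + x * (doubleSum x 1 1 2 1 +
        doubleSum x 1 2 1 1 + doubleSum x 2 2 1 0) + x * tripleSum x := by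
        rw [weightedSumGenFun_eq hx]; ring
    _ = 3 * singleSum x 1 3 + doubleSum x 1 2 0 1 +
        (x * doubleSum x 1 1 1 2 + doubleSum x 1 1 0 2 + doubleSum x 1 2 0 1) +
        x * (doubleSum x 1 1 2 1 + doubleSum x 1 2 1 1 + doubleSum x 2 2 1 0) +
        x * tripleSum x := by
      rw [← h_single, ← h_outer_one, ← h_outer_two]; ring
    _ = _ := by rw [mul_doubleSum_add_doubleSum_add_doubleSum hx]; ring

theorem weightedSumGenFun_add_eq (hx : x < 1) :
    weightedSumGenFun x + (3 * singleSum x 0 4 + doubleSum x 0 2 0 2 + 2 * doubleSum x 0 3 0 1) +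
        2 * doubleSum x 0 3 1 0 =
      2 * singleSum x 2 2 + 2 * singleSum x 1 3 + doubleSum x 2 0 0 2 := by
  have hx_top := hx.ne_top
  have h_inner := doubleSum_succ_inner hx 1 1 1 0
  have h_outer_11 := doubleSum_succ_outer hx 0 1 1 1
  have h_outer_20 := doubleSum_succ_outer hx 1 1 1 0
  have h_outer_10 := doubleSum_succ_outer hx 0 2 1 0
  simp only [zero_add, one_add_one_eq_two, Nat.reduceAdd]
    at h_inner h_outer_11 h_outer_20 h_outer_10
  have hfinite : 2 * (x * doubleSum x 1 3 1 0) + doubleSum x 0 2 1 1 + doubleSum x 1 2 1 0 ≠ ∞ := by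
    have h_1310 := doubleSum_ne_top hx (a := 1) (b := 3) (c := 1) (d := 0)
    have h_0211 := doubleSum_ne_top hx (a := 0) (b := 2) (c := 1) (d := 1)
    have h_1210 := doubleSum_ne_top hx (a := 1) (b := 2) (c := 1) (d := 0)
    norm_num at h_1310 h_0211 h_1210
    finiteness
  refine (ENNReal.add_left_inj hfinite).1 ?_
  rw [weightedSumGenFun_add_eq_tripleSum hx]
  calc _ = (x * tripleSum x + 2 * singleSum x 1 3 + doubleSum x 1 2 0 1 + doubleSum x 1 2 1 0) +
        2 * (doubleSum x 0 3 1 0 + x * doubleSum x 1 3 1 0) + 2 * singleSum x 1 3 +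
        (doubleSum x 0 2 1 1 + x * doubleSum x 1 2 1 1 + x * doubleSum x 1 1 2 1) +
        x * doubleSum x 2 2 1 0 := by ring
    _ = doubleSum x 2 0 0 2 + singleSum x 2 2 + 2 * (x * doubleSum x 1 3 1 0) +
        doubleSum x 0 2 1 1 + doubleSum x 1 2 1 0 + 2 * singleSum x 1 3 +
        (doubleSum x 1 2 1 0 + x * doubleSum x 2 2 1 0 + doubleSum x 1 1 2 0) := by
      rw [mul_tripleSum_add_eq hx, ← h_outer_10, ← h_outer_11, ← h_inner]; ring
    _ = _ := by rw [← h_outer_20, doubleSum_add_doubleSum_eq_singleSum hx]; ring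

/-! ### Multiple zeta values in `[0, ∞]` -/

/-- The multiple zeta value `ζ(s₁,…,s_d)` as an element of `[0, ∞]`, where the series always has a
meaningful sum. -/
noncomputable def emzv {d : ℕ} (s : Fin d → ℕ) : ℝ≥0∞ :=
  ∑' k : {k : Fin d → ℕ // StrictAnti k ∧ ∀ i, 0 < k i}, ∏ i, (k.1 i : ℝ≥0∞)⁻¹ ^ s i

theorem toReal_emzv {d : ℕ} (s : Fin d → ℕ) : (emzv s).toReal = mzv s := by
  rw [emzv, ENNReal.tsum_toReal_eq]
  · simp [mzv, ENNReal.toReal_prod]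
  · rintro ⟨k, -, hk⟩
    refine ENNReal.prod_ne_top fun i _ => ENNReal.pow_ne_top (ENNReal.inv_ne_top.2 ?_)
    exact_mod_cast (hk i).ne'

theorem emzv_eq_tsum {d : ℕ} (s : Fin d → ℕ) {ι : Type*} {e : ι → Fin d → ℕ}
    (he : Set.BijOn e Set.univ {k | StrictAnti k}) : emzv s = ∑' i, ∏ j, V (e i j) ^ s j := by
  let k (i : ι) : {k : Fin d → ℕ // StrictAnti k ∧ ∀ i, 0 < k i} :=
    ⟨fun j => e i j + 1, fun _ _ h => Nat.succ_lt_succ (he.mapsTo (Set.mem_univ i) h),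
      fun _ => Nat.succ_pos _⟩
  have hk : Function.Bijective k := by
    refine ⟨fun i i' h => he.injOn (Set.mem_univ i) (Set.mem_univ i') ?_, ?_⟩
    · exact funext fun j => Nat.succ_injective (congrFun (congrArg Subtype.val h) j)
    · rintro ⟨l, hl, hl_pos⟩
      obtain ⟨i, -, hi⟩ := he.surjOn (show StrictAnti fun j => l j - 1 from
        fun a b h => Nat.sub_lt_sub_right (hl_pos b) (hl h))
      refine ⟨i, Subtype.ext (funext fun j => ?_)⟩
      simpa [k, hi] using Nat.sub_add_cancel (hl_pos j)
  rw [emzv, ← (Equiv.ofBijective k hk).tsum_eq]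
  simp [k, shiftRecip]

theorem emzv_one (s : ℕ) : emzv ![s] = ∑' n, V n ^ s := by
  rw [emzv_eq_tsum ![s] (e := fun n : ℕ => ![n])]
  · simp
  · refine ⟨fun n _ => Subsingleton.strictAnti _, fun m _ n _ h => congrFun h 0, fun k _ => ?_⟩
    exact ⟨k 0, Set.mem_univ _, funext fun j => by fin_cases j; rfl⟩

theorem emzv_two (s t : ℕ) : emzv ![s, t] = ∑' n, ∑ m ∈ range n, V n ^ s * V m ^ t := by
  rw [tsum_sum_range, ← ENNReal.tsum_prod,
    emzv_eq_tsum ![s, t] (e := fun p : ℕ × ℕ => ![p.1 + p.2 + 1, p.1])]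
  · simp
  · refine ⟨fun p _ => ?_, fun p _ p' _ h => ?_, fun k hk => ?_⟩
    · simp [Fin.strictAnti_iff_succ_lt]
    · have h₀ := congrFun h 0
      have h₁ := congrFun h 1
      simp at h₀ h₁
      ext <;> omega
    · have h₀ := hk (show (0 : Fin 2) < 1 by decide)
      refine ⟨(k 1, k 0 - k 1 - 1), Set.mem_univ _, funext fun j => ?_⟩
      fin_cases j <;> simp
      omega

theorem emzv_four (s t u v : ℕ) : emzv ![s, t, u, v] = fourfoldSum fun a b c d =>
    V (a + b + c + d + 3) ^ s * (V (a + b + c + 2) ^ t * (V (a + b + 1) ^ u * V a ^ v)) := by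
  simp_rw [fourfoldSum, ← ENNReal.tsum_prod]
  rw [emzv_eq_tsum ![s, t, u, v] (e := fun p : ℕ × ℕ × ℕ × ℕ =>
    ![p.1 + p.2.1 + p.2.2.1 + p.2.2.2 + 3, p.1 + p.2.1 + p.2.2.1 + 2, p.1 + p.2.1 + 1, p.1])]
  · simp [Fin.prod_univ_four, mul_assoc]
  · refine ⟨fun p _ => ?_, fun p _ p' _ h => ?_, fun k hk => ?_⟩
    · rw [Set.mem_ofPred_eq, Fin.strictAnti_iff_succ_lt]
      intro j
      fin_cases j <;> simp
    · have h₀ := congrFun h 0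
      have h₁ := congrFun h 1
      have h₂ := congrFun h 2
      have h₃ := congrFun h 3
      simp at h₀ h₁ h₂ h₃
      ext <;> omega
    · have h₀ := hk (show (0 : Fin 4) < 1 by decide)
      have h₁ := hk (show (1 : Fin 4) < 2 by decide)
      have h₂ := hk (show (2 : Fin 4) < 3 by decide)
      refine ⟨(k 3, k 2 - k 3 - 1, k 1 - k 2 - 1, k 0 - k 1 - 1), Set.mem_univ _,
        funext fun j => ?_⟩
      fin_cases j <;> simp <;> omega

/-! ### Power series -/

/-- The value at `x` of the power series with coefficients `c`. -/
noncomputable def genFun (x : ℝ≥0∞) (c : ℕ → ℝ≥0∞) : ℝ≥0∞ := ∑' n, x ^ n * c n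

theorem genFun_add (x : ℝ≥0∞) (c d : ℕ → ℝ≥0∞) :
    genFun x (fun n => c n + d n) = genFun x c + genFun x d := by
  simp only [genFun, mul_add, ENNReal.tsum_add]

theorem genFun_const_mul (x r : ℝ≥0∞) (c : ℕ → ℝ≥0∞) :
    genFun x (fun n => r * c n) = r * genFun x c := by
  simp only [genFun, ← ENNReal.tsum_mul_left, mul_left_comm]

theorem genFun_single (x r : ℝ≥0∞) : genFun x (Pi.single 0 r) = r := by
  rw [genFun, tsum_eq_single 0 fun n hn => by rw [Pi.single_eq_of_ne hn, mul_zero]]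
  simp

theorem genFun_tsum {ι : Type*} (x : ℝ≥0∞) (c : ι → ℕ → ℝ≥0∞) :
    genFun x (fun n => ∑' i, c i n) = ∑' i, genFun x (c i) := by
  simp only [genFun, ← ENNReal.tsum_mul_left]
  exact ENNReal.tsum_comm

theorem genFun_sum {ι : Type*} (s : Finset ι) (x : ℝ≥0∞) (c : ι → ℕ → ℝ≥0∞) :
    genFun x (fun n => ∑ i ∈ s, c i n) = ∑ i ∈ s, genFun x (c i) := by
  simp only [genFun, Finset.mul_sum]
  exact Summable.tsum_finsetSum fun _ _ => ENNReal.summable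

theorem genFun_mul (x : ℝ≥0∞) (c d : ℕ → ℝ≥0∞) : genFun x c * genFun x d =
    genFun x fun n => ∑ a ∈ range (n + 1), c a * d (n - a) := by
  simp_rw [genFun, ← ENNReal.tsum_mul_right, ← ENNReal.tsum_mul_left]
  rw [tsum_tsum_eq_tsum_sum_range fun a b => x ^ a * c a * (x ^ b * d b)]
  refine tsum_congr fun n => ?_
  rw [mul_sum]
  refine sum_congr rfl fun a ha => ?_
  rw [← Nat.add_sub_of_le (mem_range_succ_iff.1 ha), pow_add, Nat.add_sub_cancel_left]
  ring

theorem genFun_eq_add (x : ℝ≥0∞) (c : ℕ → ℝ≥0∞) :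
    genFun x c = c 0 + x * genFun x fun n => c (n + 1) := by
  rw [genFun, tsum_eq_zero_add' ENNReal.summable, genFun, ← ENNReal.tsum_mul_left]
  simp only [pow_zero, one_mul, pow_succ', mul_assoc]

theorem genFun_succ_ne_top {c : ℕ → ℝ≥0∞} (hx : x ≠ 0) (h : genFun x c ≠ ∞) :
    genFun x (fun n => c (n + 1)) ≠ ∞ := by
  rw [genFun_eq_add] at h
  exact fun htop => h (by simp [htop, hx])

theorem tendsto_genFun {r : ℝ≥0∞} {c : ℕ → ℝ≥0∞} (hr : r ≠ 0) (h : genFun r c ≠ ∞) :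
    Tendsto (genFun · c) (𝓝[>] 0) (𝓝 (c 0)) := by
  have hbound : Tendsto (fun x => c 0 + x * genFun r fun n => c (n + 1)) (𝓝[>] 0) (𝓝 (c 0)) := by
    have hid : Tendsto id (𝓝[>] (0 : ℝ≥0∞)) (𝓝 0) := tendsto_id'.2 nhdsWithin_le_nhds
    simpa using (ENNReal.Tendsto.mul_const hid (Or.inr (genFun_succ_ne_top hr h))).const_add (c 0)
  refine tendsto_of_tendsto_of_tendsto_of_le_of_le' tendsto_const_nhds hbound
    (.of_forall fun x => (genFun_eq_add x c).ge.trans' le_self_add) ?_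
  filter_upwards [nhdsWithin_le_nhds (Iio_mem_nhds hr.bot_lt)] with x hx
  rw [genFun_eq_add]
  unfold genFun
  gcongr
  exact (Set.mem_Iio.1 hx).le

instance nhdsGT_zero_neBot : (𝓝[>] (0 : ℝ≥0∞)).NeBot := nhdsGT_neBot_of_exists_gt ⟨1, one_pos⟩

theorem eventually_nhdsGT_zero_ne : ∀ᶠ x : ℝ≥0∞ in 𝓝[>] 0, x ≠ 0 :=
  eventually_nhdsWithin_of_forall fun _ hx => (Set.mem_Ioi.1 hx).ne'

theorem coeff_zero_eq_of_genFun_eventuallyEq {c d : ℕ → ℝ≥0∞}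
    (hc : ∀ᶠ x in 𝓝[>] 0, genFun x c ≠ ∞) (h : ∀ᶠ x in 𝓝[>] 0, genFun x c = genFun x d) :
    c 0 = d 0 := by
  obtain ⟨r, hr, hcr, hcd⟩ := (eventually_nhdsGT_zero_ne.and (hc.and h)).exists
  exact tendsto_nhds_unique_of_eventuallyEq (tendsto_genFun hr hcr)
    (tendsto_genFun hr (hcd ▸ hcr)) h

theorem coeff_eq_of_genFun_eventuallyEq {c d : ℕ → ℝ≥0∞}
    (hc : ∀ᶠ x in 𝓝[>] 0, genFun x c ≠ ∞) (h : ∀ᶠ x in 𝓝[>] 0, genFun x c = genFun x d) (n : ℕ) :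
    c n = d n := by
  induction n generalizing c d with
  | zero => exact coeff_zero_eq_of_genFun_eventuallyEq hc h
  | succ _ ih =>
    refine ih (c := fun n => c (n + 1)) (d := fun n => d (n + 1)) ?_ ?_
    · filter_upwards [eventually_nhdsGT_zero_ne, hc] with x hx hcx using genFun_succ_ne_top hx hcx
    · filter_upwards [eventually_nhdsGT_zero_ne, nhdsWithin_le_nhds (Iio_mem_nhds one_pos), hc, h]
        with x hx hx_lt hcx hcd
      rw [genFun_eq_add] at hcx
      rw [genFun_eq_add x c, genFun_eq_add x d, ← coeff_zero_eq_of_genFun_eventuallyEq hc h,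
        ENNReal.add_right_inj (ENNReal.add_ne_top.1 hcx).1] at hcd
      exact (ENNReal.mul_right_inj hx (Set.mem_Iio.1 hx_lt).ne_top).1 hcd

/-! ### Expansion of the generating functions -/

theorem shiftRecip_eq_genFun (hx : x < 1) (n : ℕ) : U x n = genFun x fun a => V n ^ (a + 1) := by
  have hratio : x * V n < 1 := (mul_le_of_le_one_right' (shiftRecip_zero_le_one n)).trans_lt hx
  have hlim : Tendsto (fun a => (x * V n) ^ a * U x n) atTop (𝓝 0) := by
    simpa using ENNReal.Tendsto.mul_const (ENNReal.tendsto_pow_atTop_nhds_zero_of_lt_one hratio)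
      (Or.inr (shiftRecip_ne_top (lt_natCast_add_one hx n)))
  have hstep (a : ℕ) :
      (x * V n) ^ a * U x n = x ^ a * V n ^ (a + 1) + (x * V n) ^ (a + 1) * U x n := by
    nth_rw 1 [shiftRecip_eq_add_mul hx n]
    ring
  simpa [genFun] using (tsum_eq_of_telescoping hstep hlim).symm

theorem shiftRecip_add_self_eq_genFun (hx : x + x < 1) (n : ℕ) :
    U (x + x) n = genFun x fun a => 2 ^ a * V n ^ (a + 1) := by
  rw [shiftRecip_eq_genFun hx]
  refine tsum_congr fun a => ?_
  ring

theorem mul_shiftRecip_mul_shiftRecip_eq_genFun (hx : x + x < 1) (n : ℕ) :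
    x * U (x + x) n * U x n = genFun x fun a => (2 ^ a - 1) * V n ^ (a + 1) := by
  have hx₁ : x < 1 := le_self_add.trans_lt hx
  refine (ENNReal.add_right_inj (shiftRecip_ne_top (lt_natCast_add_one hx₁ n))).1 ?_
  rw [← shiftRecip_add (lt_natCast_add_one hx n), shiftRecip_eq_genFun hx₁,
    shiftRecip_add_self_eq_genFun hx, ← genFun_add]
  congr 1 with a
  rw [← one_add_mul, add_tsub_cancel_of_le (one_le_pow₀ one_le_two)]

theorem shiftRecip_sq_eq_genFun (hx : x < 1) (n : ℕ) :
    U x n ^ 2 = genFun x fun a => (a + 1) * V n ^ (a + 2) := by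
  rw [sq, shiftRecip_eq_genFun hx, genFun_mul]
  congr 1 with a
  have hterm (b : ℕ) (hb : b ∈ range (a + 1)) :
      V n ^ (b + 1) * V n ^ (a - b + 1) = V n ^ (a + 2) := by
    rw [← pow_add, show b + 1 + (a - b + 1) = a + 2 by grind]
  rw [sum_congr rfl hterm, sum_const, card_range, nsmul_eq_mul]
  push_cast
  rfl

theorem singleSum_two_two_eq_genFun (hx : x < 1) :
    singleSum x 2 2 = genFun x fun n => (n + 1) * emzv ![n + 4] := by
  simp_rw [singleSum, shiftRecip_sq_eq_genFun hx, mul_comm _ (V _ ^ 2), ← genFun_const_mul,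
    ← genFun_tsum, emzv_one, ← ENNReal.tsum_mul_left]
  congr! 4
  ring

theorem singleSum_one_three_eq_genFun (hx : x < 1) :
    singleSum x 1 3 = genFun x fun n => emzv ![n + 4] := by
  simp_rw [singleSum, pow_one, shiftRecip_eq_genFun hx, mul_comm _ (V _ ^ 3), ← genFun_const_mul,
    ← genFun_tsum, emzv_one]
  congr! 4
  ring

theorem doubleSum_two_zero_zero_two_eq_genFun (hx : x < 1) :
    doubleSum x 2 0 0 2 = genFun x fun n => (n + 1) * emzv ![n + 2, 2] := by
  simp_rw [doubleSum, pow_zero, mul_one, one_mul, shiftRecip_sq_eq_genFun hx, mul_comm _ (V _ ^ 2),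
    ← genFun_const_mul, ← genFun_sum, ← genFun_tsum, emzv_two, ← ENNReal.tsum_mul_left, mul_sum]
  congr! 5
  ring

theorem doubleSum_zero_three_one_zero_eq_genFun (hx : x < 1) :
    doubleSum x 0 3 1 0 = genFun x fun n => emzv ![3, n + 1] := by
  simp_rw [doubleSum, pow_zero, pow_one, mul_one, one_mul, shiftRecip_eq_genFun hx,
    ← genFun_const_mul, ← genFun_sum, ← genFun_tsum, emzv_two]

theorem fourfoldSum_sum {ι : Type*} (s : Finset ι) (f : ι → ℕ → ℕ → ℕ → ℕ → ℝ≥0∞) :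
    fourfoldSum (fun a b c d => ∑ i ∈ s, f i a b c d) = ∑ i ∈ s, fourfoldSum (f i) := by
  simp only [fourfoldSum, Summable.tsum_finsetSum fun _ _ => ENNReal.summable]

theorem fourfoldSum_const_mul (r : ℝ≥0∞) (f : ℕ → ℕ → ℕ → ℕ → ℝ≥0∞) :
    fourfoldSum (fun a b c d => r * f a b c d) = r * fourfoldSum f := by
  simp only [fourfoldSum, ENNReal.tsum_mul_left]

theorem fourfoldSum_genFun (f : ℕ → ℕ → ℕ → ℕ → ℕ → ℝ≥0∞) :
    fourfoldSum (fun a b c d => genFun x (f a b c d)) =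
      genFun x fun n => fourfoldSum fun a b c d => f a b c d n := by
  simp only [fourfoldSum, genFun_tsum]

/-- The coefficient of `x ^ n` in `weightedSumGenFun x`: the left-hand side of the theorem in weight
`n + 4`, taken in `[0, ∞]`, with every index of summation lowered by one. -/
noncomputable def weightedSum (n : ℕ) : ℝ≥0∞ :=
  ∑ a ∈ range (n + 1), ∑ b ∈ range (n - a + 1), ∑ c ∈ range (n - a - b + 1),
    (2 ^ a - 1) * 2 ^ (b + 1) * (2 ^ (c + 1) + 1) *
      emzv ![a + 1, b + 1, c + 1, n - a - b - c + 1]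

theorem weightedSumGenFun_eq_genFun (hx : x + x < 1) :
    weightedSumGenFun x = genFun x weightedSum := by
  have hx₁ : x < 1 := le_self_add.trans_lt hx
  have htwo (n : ℕ) : 2 * U (x + x) n = genFun x fun b => 2 ^ (b + 1) * V n ^ (b + 1) := by
    rw [shiftRecip_add_self_eq_genFun hx, ← genFun_const_mul]
    simp only [pow_succ', mul_assoc]
  have hthree (n : ℕ) : 2 * U (x + x) n + U x n =
      genFun x fun c => (2 ^ (c + 1) + 1) * V n ^ (c + 1) := by
    rw [htwo, shiftRecip_eq_genFun hx₁, ← genFun_add]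
    simp only [add_one_mul]
  have hcoeff (n : ℕ) : weightedSum n = fourfoldSum fun i j k l =>
      ∑ a ∈ range (n + 1), (2 ^ a - 1) * V (i + j + k + l + 3) ^ (a + 1) *
        ∑ b ∈ range (n - a + 1), 2 ^ (b + 1) * V (i + j + k + 2) ^ (b + 1) *
          ∑ c ∈ range (n - a - b + 1), (2 ^ (c + 1) + 1) * V (i + j + 1) ^ (c + 1) *
            V i ^ (n - a - b - c + 1) := by
    simp only [weightedSum, emzv_four, ← fourfoldSum_const_mul, ← fourfoldSum_sum, mul_sum]
    congr! 8
    ring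
  simp_rw [weightedSumGenFun, hthree, htwo, mul_shiftRecip_mul_shiftRecip_eq_genFun hx,
    shiftRecip_eq_genFun hx₁, mul_assoc (genFun x _), genFun_mul, fourfoldSum_genFun]
  exact congrArg (genFun x) (funext fun n => (hcoeff n).symm)

/-! ### Comparison of coefficients -/

theorem genFun_weightedSum_add_eq (hx : x + x < 1) :
    genFun x (fun n => weightedSum n + 2 * emzv ![3, n + 1] +
      (Pi.single 0 (3 * singleSum 0 0 4 + doubleSum 0 0 2 0 2 + 2 * doubleSum 0 0 3 0 1) :
        ℕ → ℝ≥0∞) n) =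
    genFun x fun n => 2 * (n + 2) * emzv ![n + 4] + (n + 1) * emzv ![n + 2, 2] := by
  have hx₁ : x < 1 := le_self_add.trans_lt hx
  have hsingle : singleSum x 0 4 = singleSum 0 0 4 := by simp [singleSum]
  have hdouble (s t : ℕ) : doubleSum x 0 s 0 t = doubleSum 0 0 s 0 t := by simp [doubleSum]
  have hseries := weightedSumGenFun_add_eq hx₁
  rw [weightedSumGenFun_eq_genFun hx, singleSum_two_two_eq_genFun hx₁,
    singleSum_one_three_eq_genFun hx₁, doubleSum_two_zero_zero_two_eq_genFun hx₁,
    doubleSum_zero_three_one_zero_eq_genFun hx₁, hsingle, hdouble, hdouble] at hseries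
  rw [genFun_add, genFun_add, genFun_add, genFun_const_mul, genFun_single, add_right_comm, hseries,
    ← genFun_const_mul, ← genFun_const_mul, ← genFun_add]
  congr 2 with n
  ring

theorem genFun_weightedSum_ne_top (hx : x < 1) :
    genFun x (fun n => 2 * (n + 2) * emzv ![n + 4] + (n + 1) * emzv ![n + 2, 2]) ≠ ∞ := by
  have htop : 2 * singleSum x 2 2 + 2 * singleSum x 1 3 + doubleSum x 2 0 0 2 ≠ ∞ := by
    have := singleSum_ne_top hx (a := 2) (b := 2) (by norm_num)
    have := singleSum_ne_top hx (a := 1) (b := 3) (by norm_num)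
    have := doubleSum_ne_top hx (a := 2) (b := 0) (c := 0) (d := 2) (by norm_num) (by norm_num)
    finiteness
  rw [singleSum_two_two_eq_genFun hx, singleSum_one_three_eq_genFun hx,
    doubleSum_two_zero_zero_two_eq_genFun hx, ← genFun_const_mul, ← genFun_const_mul,
    ← genFun_add, ← genFun_add] at htop
  convert htop using 3
  ring

theorem eventually_nhdsGT_zero_add_self_lt : ∀ᶠ x : ℝ≥0∞ in 𝓝[>] 0, x + x < 1 := by
  have hlim : Tendsto (fun x : ℝ≥0∞ => x + x) (𝓝 0) (𝓝 0) := by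
    simpa using (tendsto_id (α := ℝ≥0∞) (x := 𝓝 0)).add tendsto_id
  exact (hlim.eventually_lt_const one_pos).filter_mono nhdsWithin_le_nhds

theorem weightedSum_add_eq {n : ℕ} (hn : n ≠ 0) : weightedSum n + 2 * emzv ![3, n + 1] =
    2 * (n + 2) * emzv ![n + 4] + (n + 1) * emzv ![n + 2, 2] := by
  have hcoeff := coeff_eq_of_genFun_eventuallyEq
    (eventually_nhdsGT_zero_add_self_lt.mono fun x hx =>
      genFun_weightedSum_ne_top (le_self_add.trans_lt hx))
    (eventually_nhdsGT_zero_add_self_lt.mono fun x hx => (genFun_weightedSum_add_eq hx).symm) n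
  simpa [Pi.single_eq_of_ne hn] using hcoeff.symm

/-! ### Return to real numbers -/

theorem emzv_one_ne_top {s : ℕ} (hs : 2 ≤ s) : emzv ![s] ≠ ∞ := by
  simpa [emzv_one, singleSum] using singleSum_ne_top one_pos (a := 0) (b := s) (by simpa using hs)

theorem emzv_two_ne_top {s t : ℕ} (hs : 2 ≤ s) (ht : 1 ≤ t) : emzv ![s, t] ≠ ∞ := by
  simpa [emzv_two, doubleSum] using
    doubleSum_ne_top one_pos (a := 0) (b := s) (c := 0) (d := t) (by simpa using hs)
      (by simpa using ht)

theorem weightedSum_ne_top {n : ℕ} (hn : n ≠ 0) : weightedSum n ≠ ∞ := by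
  have hone := emzv_one_ne_top (s := n + 4) (by omega)
  have htwo := emzv_two_ne_top (s := n + 2) (t := 2) (by omega) (by omega)
  refine ne_top_of_le_ne_top ?_ (le_self_add.trans_eq (weightedSum_add_eq hn))
  finiteness

theorem toReal_weightedSum {n : ℕ} (hn : n ≠ 0) : (weightedSum n).toReal =
    2 * (n + 2) * mzv ![n + 4] + (n + 1) * mzv ![n + 2, 2] - 2 * mzv ![3, n + 1] := by
  have hone := emzv_one_ne_top (s := n + 4) (by omega)
  have htwo := emzv_two_ne_top (s := n + 2) (t := 2) (by omega) (by omega)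
  have htwo_swap := emzv_two_ne_top (s := 3) (t := n + 1) (by omega) (by omega)
  have hreal := congrArg ENNReal.toReal (weightedSum_add_eq hn)
  rw [ENNReal.toReal_add (weightedSum_ne_top hn) (by finiteness),
    ENNReal.toReal_add (by finiteness) (by finiteness)] at hreal
  simp only [ENNReal.toReal_mul, toReal_emzv] at hreal
  rw [ENNReal.toReal_add (by simp) (by simp), ENNReal.toReal_add (by simp) (by simp)] at hreal
  simp only [ENNReal.toReal_ofNat, ENNReal.toReal_natCast, ENNReal.toReal_one] at hreal
  exact eq_sub_of_add_eq hreal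

theorem toReal_weightedSum_eq_sum {n : ℕ} (h : weightedSum n ≠ ∞) : (weightedSum n).toReal =
    ∑ a ∈ range (n + 1), ∑ b ∈ range (n - a + 1), ∑ c ∈ range (n - a - b + 1),
      ((2 : ℝ) ^ a - 1) * 2 ^ (b + 1) * (2 ^ (c + 1) + 1) *
        mzv ![a + 1, b + 1, c + 1, n - a - b - c + 1] := by
  have hpow (a : ℕ) : ((2 : ℝ≥0∞) ^ a - 1).toReal = 2 ^ a - 1 := by
    simp [ENNReal.toReal_sub_of_le (one_le_pow₀ one_le_two)]
  have hpow_succ (c : ℕ) : ((2 : ℝ≥0∞) ^ (c + 1) + 1).toReal = 2 ^ (c + 1) + 1 := by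
    simp [ENNReal.toReal_add]
  simp only [weightedSum, ENNReal.sum_ne_top] at h
  rw [weightedSum,
    ENNReal.toReal_sum fun a ha =>
      ENNReal.sum_ne_top.2 fun b hb => ENNReal.sum_ne_top.2 (h a ha b hb)]
  refine sum_congr rfl fun a ha => ?_
  rw [ENNReal.toReal_sum fun b hb => ENNReal.sum_ne_top.2 (h a ha b hb)]
  refine sum_congr rfl fun b hb => ?_
  rw [ENNReal.toReal_sum (h a ha b hb)]
  simp only [ENNReal.toReal_mul, hpow, hpow_succ, toReal_emzv, ENNReal.toReal_pow,
    ENNReal.toReal_ofNat]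

theorem sum_Icc_eq_sum_range {M : Type*} [AddCommMonoid M] (n : ℕ) (f : ℕ → ℕ → ℕ → ℕ → M)
    (hf : ∀ b c d, f 1 b c d = 0) :
    ∑ a ∈ Icc 2 (n + 4 - 3), ∑ b ∈ Icc 1 (n + 4 - a - 2), ∑ c ∈ Icc 1 (n + 4 - a - b - 1),
      f a b c (n + 4 - a - b - c) =
    ∑ a ∈ range (n + 1), ∑ b ∈ range (n - a + 1), ∑ c ∈ range (n - a - b + 1),
      f (a + 1) (b + 1) (c + 1) (n - a - b - c + 1) := by
  simp only [← Ico_add_one_right_eq_Icc, sum_Ico_eq_sum_range]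
  rw [sum_range_succ' _ n]
  simp only [zero_add, hf, sum_const_zero, add_zero]
  refine sum_congr (by congr 1) fun a ha => ?_
  rw [mem_range] at ha
  refine sum_congr (by congr 1; omega) fun b hb => ?_
  rw [mem_range] at hb
  refine sum_congr (by congr 1; omega) fun c hc => ?_
  rw [mem_range] at hc
  congr 1 <;> omega

end WeightedSum

theorem weighted_sum_depth4_2221 (w : ℕ) (hw : 5 ≤ w)
    (q u : ℕ) (hq : q = w - 3) (hu : u = w - 2) :
    (∑ a ∈ Finset.Icc 2 (w - 3), ∑ b ∈ Finset.Icc 1 (w - a - 2),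
      ∑ c ∈ Finset.Icc 1 (w - a - b - 1),
        ((2 : ℝ) ^ (a - 1) - 1) * (2 : ℝ) ^ b * ((2 : ℝ) ^ c + 1) *
          mzv ![a, b, c, w - a - b - c])
    = 2 * (u : ℝ) * mzv ![w] + (q : ℝ) * mzv ![u, 2] - 2 * mzv ![3, q] := by
  obtain ⟨n, rfl⟩ : ∃ n, w = n + 4 := ⟨w - 4, by omega⟩
  obtain rfl : q = n + 1 := by omega
  obtain rfl : u = n + 2 := by omega
  have hn : n ≠ 0 := by omega
  rw [WeightedSum.sum_Icc_eq_sum_range n (fun a b c d =>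
    ((2 : ℝ) ^ (a - 1) - 1) * 2 ^ b * (2 ^ c + 1) * mzv ![a, b, c, d]) (by simp)]
  simpa only [Nat.cast_add, Nat.cast_one, Nat.cast_ofNat, Nat.add_sub_cancel,
    WeightedSum.toReal_weightedSum_eq_sum (WeightedSum.weightedSum_ne_top hn)]
    using WeightedSum.toReal_weightedSum hn
end
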